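/- arXiv:2503.12760 — 3 statements merged into one kernel-verified Lean document; each statement's English description precedes it below -/
import Mathlib

section
/- Let Π̃ be a fixed finite set of policies, π_0 a baseline policy, 𝒮 the set of guardrail outcomes, and w_j ∈ [−1,0] for j ∈ 𝒮. For π ∈ Π̃ and j ∈ 𝒮 define the lower bound Ĉ_j^{IPW}(π, α) = (V̂_j^{IPW}(π) − (1+w_j)V̂_j^{IPW}(π_0)) − (σ̂_j(π) √(2 log(3|Π̃||𝒮|/(2α))/n) + 3 R_j log(3|Π̃||𝒮|/(2α))/n), where R_j = (2+w_j)/c and σ̂_j²(π) = (1/n) Σ_{i=1}^n ((ψ_j^{IPW}(O_i, π; e) − (1+w_j)ψ_j^{IPW}(O_i, π_0; e)) − (V̂_j^{IPW}(π) − (1+w_j)V̂_j^{IPW}(π_0)))². Then under strict positivity, for every sample size n ∈ ℕ, P(∃ π ∈ Π̃, j ∈ 𝒮 : V_j(π) − (1+w_j)V_j(π_0) < Ĉ_j^{IPW}(π, α)) ≤ α, i.e., the Ĉ_j^{IPW}(π, α) are simultaneous finite-sample 1−α lower confidence bounds for the weighted policy-value differences. -/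
set_option autoImplicit false

open MeasureTheory ProbabilityTheory

/-- IPW score `ψ_j^{IPW}(o, π; e)`. -/
noncomputable def psiIPW {𝒳 : Type*} (K dY : ℕ)
    (e : Fin K → 𝒳 → ℝ) (π : Fin K → 𝒳 → ℝ) (j : Fin dY)
    (o : 𝒳 × Fin K × (Fin dY → ℝ)) : ℝ :=
  ∑ k : Fin K, π k o.1 * (if o.2.1 = k then o.2.2 j / e k o.1 else 0)

/-- IPW estimator `V̂_j^{IPW}(π)` from `n` observations. -/
noncomputable def VhatIPW {𝒳 : Type*} (K dY : ℕ) (n : ℕ)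
    (e : Fin K → 𝒳 → ℝ) (π : Fin K → 𝒳 → ℝ) (j : Fin dY)
    (d : Fin n → 𝒳 × Fin K × (Fin dY → ℝ)) : ℝ :=
  (1 / (n : ℝ)) * ∑ i, psiIPW K dY e π j (d i)

/-- Estimated weighted contrast `V̂_j^{IPW}(π) − (1+w_j) V̂_j^{IPW}(π₀)`. -/
noncomputable def DhatIPW {𝒳 : Type*} (K dY : ℕ) (n : ℕ)
    (e : Fin K → 𝒳 → ℝ) (π π₀ : Fin K → 𝒳 → ℝ) (j : Fin dY) (w : ℝ)
    (d : Fin n → 𝒳 × Fin K × (Fin dY → ℝ)) : ℝ :=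
  VhatIPW K dY n e π j d - (1 + w) * VhatIPW K dY n e π₀ j d

/-- Empirical variance `σ̂_j²(π)` of the per-observation IPW contrasts. -/
noncomputable def sigmahatSqIPW {𝒳 : Type*} (K dY : ℕ) (n : ℕ)
    (e : Fin K → 𝒳 → ℝ) (π π₀ : Fin K → 𝒳 → ℝ) (j : Fin dY) (w : ℝ)
    (d : Fin n → 𝒳 × Fin K × (Fin dY → ℝ)) : ℝ :=
  (1 / (n : ℝ)) * ∑ i,
    ((psiIPW K dY e π j (d i) - (1 + w) * psiIPW K dY e π₀ j (d i))
      - DhatIPW K dY n e π π₀ j w d) ^ 2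

/-- Empirical-Bernstein joint lower confidence bound `Ĉ_j^{IPW}(π, α)`, where `T = |Π̃|`,
`S = |𝒮|` and `R_j = (2+w_j)/c`. -/
noncomputable def ChatIPW {𝒳 : Type*} (K dY : ℕ) (n : ℕ)
    (e : Fin K → 𝒳 → ℝ) (π π₀ : Fin K → 𝒳 → ℝ) (j : Fin dY) (w : ℝ)
    (c α : ℝ) (T S : ℕ)
    (d : Fin n → 𝒳 × Fin K × (Fin dY → ℝ)) : ℝ :=
  DhatIPW K dY n e π π₀ j w d
    - (Real.sqrt (sigmahatSqIPW K dY n e π π₀ j w d)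
          * Real.sqrt (2 * Real.log (3 * T * S / (2 * α)) / n)
        + 3 * ((2 + w) / c) * Real.log (3 * T * S / (2 * α)) / n)

/-!
Divide the IPW contrasts by their range `R_j = (2 + w_j) / c` and centre them: they become i.i.d.
variables `Xᵢ` with values in an interval `[b - 1, b]`. Let `s²` be the sum of their variances and
`t = √(2L)`. Bernstein's inequality gives `∑ Xᵢ < s t + b t² / 6` outside an event of probability
`exp (-L)`. The lower tail of the nonnegative variables `Xᵢ²`, whose second moments sum to at most
`max(b, 1 - b)² s²`, gives `∑ Xᵢ² > s² - κ max(b, 1 - b) s t` outside an event of probability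
`exp (-κ² L)`. When both bounds hold, `s` may be replaced by the empirical standard deviation at the
price of enlarging the additive term to `3 t² / 2 = 3 L`.

For `9/10 ≤ L` the choice `κ = 4/3` makes the total failure probability at most `3/2 exp (-L)`. For
`log (3/2) ≤ L ≤ 9/10` Cantelli's bound `1 / (1 + t²)` is better than Bernstein's, and `κ = 3/2`
gives the same total; for smaller `L` this total exceeds `1`. The factor `3/2` is the one inside the
logarithm `L = log (3 |Π̃| |𝒮| / (2α))`, so a union bound over policies and outcomes finishes.
-/

section ExponentialBounds

lemma exp_le_one_add_add_sq_div_of_nonneg {x : ℝ} (hx : 0 ≤ x) (hx3 : x < 3) :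
    Real.exp x ≤ 1 + x + x ^ 2 / (2 * (1 - x / 3)) := by
  have hexp : HasSum (fun k : ℕ => x ^ (k + 2) / (k + 2).factorial) (Real.exp x - (1 + x)) := by
    have h := NormedSpace.expSeries_div_hasSum_exp x
    rw [← Real.exp_eq_exp_ℝ] at h
    simpa [Finset.sum_range_succ] using (hasSum_nat_add_iff' 2).2 h
  have hgeom : HasSum (fun k : ℕ => x ^ 2 / 2 * (x / 3) ^ k) (x ^ 2 / 2 * (1 - x / 3)⁻¹) :=
    (hasSum_geometric_of_lt_one (by positivity) (by linarith)).mul_left _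
  have hterm (k : ℕ) : x ^ (k + 2) / (k + 2).factorial ≤ x ^ 2 / 2 * (x / 3) ^ k := by
    have hfact : (2 * 3 ^ k : ℝ) ≤ (k + 2).factorial := by
      rw [add_comm k]
      exact_mod_cast Nat.factorial_mul_pow_le_factorial (m := 2) (n := k)
    calc x ^ (k + 2) / (k + 2).factorial ≤ x ^ (k + 2) / (2 * 3 ^ k) := by gcongr
      _ = x ^ 2 / 2 * (x / 3) ^ k := by rw [div_pow, pow_add]; field_simp
  have hle := hasSum_le hterm hexp hgeom
  rw [← div_eq_mul_inv, div_div] at hle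
  linarith

lemma exp_neg_le_one_sub_add_sq_div_two {x : ℝ} (hx : 0 ≤ x) :
    Real.exp (-x) ≤ 1 - x + x ^ 2 / 2 := by
  rw [Real.exp_neg, inv_le_iff_one_le_mul₀ (Real.exp_pos x)]
  calc 1 ≤ (1 - x + x ^ 2 / 2) * (1 + x + x ^ 2 / 2) := by nlinarith [sq_nonneg (x ^ 2)]
    _ ≤ (1 - x + x ^ 2 / 2) * Real.exp x := by
      gcongr
      · nlinarith [sq_nonneg (x - 1)]
      · exact Real.quadratic_le_exp_of_nonneg hx

lemma exp_le_one_add_add_sq_div {x y : ℝ} (hxy : x ≤ y) (hy : 0 ≤ y) (hy3 : y < 3) :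
    Real.exp x ≤ 1 + x + x ^ 2 / (2 * (1 - y / 3)) := by
  have hpos : 0 < 1 - y / 3 := by linarith
  rcases le_total 0 x with hx | hx
  · refine (exp_le_one_add_add_sq_div_of_nonneg hx (by linarith)).trans ?_
    gcongr
  · calc Real.exp x ≤ 1 + x + x ^ 2 / 2 := by
          simpa using exp_neg_le_one_sub_add_sq_div_two (neg_nonneg.2 hx)
      _ ≤ 1 + x + x ^ 2 / (2 * (1 - y / 3)) := by gcongr; linarith

end ExponentialBounds

section TailBounds

variable {Ω : Type*} {mΩ : MeasurableSpace Ω} {μ : Measure Ω}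

lemma measureReal_add_le_le_variance_div [IsProbabilityMeasure μ] {X : Ω → ℝ} (hX : MemLp X 2 μ)
    {t : ℝ} (ht : 0 < t) :
    μ.real {ω | μ[X] + t ≤ X ω} ≤ Var[X; μ] / (Var[X; μ] + t ^ 2) := by
  have hv : 0 ≤ Var[X; μ] := variance_nonneg X μ
  -- Markov's inequality for `(X - μ[X] + a) ^ 2`, with the shift `a` that minimises the bound.
  obtain ⟨a, ha⟩ : ∃ a, a = Var[X; μ] / t := ⟨_, rfl⟩
  have ha0 : 0 ≤ a := by rw [ha]; positivity
  have hXa : MemLp (fun ω => X ω + (a - μ[X])) 2 μ := hX.add (memLp_const _)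
  have hsecond : ∫ ω, (X ω + (a - μ[X])) ^ 2 ∂μ = Var[X; μ] + a ^ 2 := by
    have hvar := variance_eq_sub hXa
    have hmean : ∫ ω, (X ω + (a - μ[X])) ∂μ = a := by
      rw [integral_add (hX.integrable one_le_two) (integrable_const _)]
      simp
    rw [variance_add_const hX.aestronglyMeasurable, hmean] at hvar
    simp only [Pi.pow_apply] at hvar
    linarith
  have hmarkov : (t + a) ^ 2 * μ.real {ω | (t + a) ^ 2 ≤ (X ω + (a - μ[X])) ^ 2}
      ≤ ∫ ω, (X ω + (a - μ[X])) ^ 2 ∂μ :=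
    mul_meas_ge_le_integral_of_nonneg (Filter.Eventually.of_forall fun ω => sq_nonneg _)
      hXa.integrable_sq _
  rw [hsecond, ← le_div_iff₀' (by positivity)] at hmarkov
  calc μ.real {ω | μ[X] + t ≤ X ω}
      ≤ μ.real {ω | (t + a) ^ 2 ≤ (X ω + (a - μ[X])) ^ 2} := by
        refine measureReal_mono fun ω hω => ?_
        simp only [Set.mem_ofPred_eq] at hω ⊢
        exact pow_le_pow_left₀ (by positivity) (by linarith) 2
    _ ≤ (Var[X; μ] + a ^ 2) / (t + a) ^ 2 := hmarkov
    _ = Var[X; μ] / (Var[X; μ] + t ^ 2) := by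
        rw [ha]
        field_simp
        ring

lemma integrable_exp_mul_of_le [IsFiniteMeasure μ] {X : Ω → ℝ} {b l : ℝ} (hX : AEMeasurable X μ)
    (hb : ∀ᵐ ω ∂μ, X ω ≤ b) (hl : 0 ≤ l) : Integrable (fun ω => Real.exp (l * X ω)) μ := by
  refine .of_bound (by fun_prop) (Real.exp (l * b)) ?_
  filter_upwards [hb] with ω hω
  rw [Real.norm_eq_abs, Real.abs_exp]
  gcongr

lemma mgf_le_exp_of_le [IsProbabilityMeasure μ] {X : Ω → ℝ} {b l : ℝ} (hX : MemLp X 2 μ)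
    (hmean : μ[X] = 0) (hb : ∀ᵐ ω ∂μ, X ω ≤ b) (hb0 : 0 ≤ b) (hl : 0 ≤ l) (hlb : l * b < 3) :
    mgf X μ l ≤ Real.exp (l ^ 2 / (2 * (1 - l * b / 3)) * ∫ ω, X ω ^ 2 ∂μ) := by
  set q := l ^ 2 / (2 * (1 - l * b / 3))
  have hlin : Integrable (fun ω => 1 + l * X ω) μ :=
    (integrable_const 1).add ((hX.integrable one_le_two).const_mul l)
  calc mgf X μ l ≤ ∫ ω, (1 + l * X ω + q * X ω ^ 2) ∂μ := by
        refine integral_mono_ae (integrable_exp_mul_of_le hX.aemeasurable hb hl)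
          (hlin.add (hX.integrable_sq.const_mul q)) ?_
        filter_upwards [hb] with ω hω
        refine (exp_le_one_add_add_sq_div (y := l * b) (by gcongr) (by positivity) hlb).trans_eq ?_
        ring
    _ = q * ∫ ω, X ω ^ 2 ∂μ + 1 := by
        rw [integral_add hlin (hX.integrable_sq.const_mul q), integral_add (integrable_const 1)
          ((hX.integrable one_le_two).const_mul l), integral_const_mul, integral_const_mul, hmean]
        simp [add_comm]
    _ ≤ Real.exp (q * ∫ ω, X ω ^ 2 ∂μ) := Real.add_one_le_exp _

lemma mgf_neg_le_exp_of_nonneg [IsProbabilityMeasure μ] {X : Ω → ℝ} {l : ℝ} (hX : MemLp X 2 μ)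
    (hX0 : ∀ᵐ ω ∂μ, 0 ≤ X ω) (hl : 0 ≤ l) :
    mgf (-X) μ l ≤ Real.exp (l ^ 2 / 2 * ∫ ω, X ω ^ 2 ∂μ - l * μ[X]) := by
  have hlin : Integrable (fun ω => 1 - l * X ω) μ :=
    (integrable_const 1).sub ((hX.integrable one_le_two).const_mul l)
  have hquad : Integrable (fun ω => l ^ 2 / 2 * X ω ^ 2) μ := hX.integrable_sq.const_mul _
  calc mgf (-X) μ l ≤ ∫ ω, (1 - l * X ω + l ^ 2 / 2 * X ω ^ 2) ∂μ := by
        refine integral_mono_ae (integrable_exp_mul_of_le (b := 0) hX.aemeasurable.neg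
          (by simpa using hX0) hl) (hlin.add hquad) ?_
        filter_upwards [hX0] with ω hω
        have hexp := exp_neg_le_one_sub_add_sq_div_two (mul_nonneg hl hω)
        simp only [Pi.neg_apply, mul_neg]
        linarith
    _ = l ^ 2 / 2 * ∫ ω, X ω ^ 2 ∂μ - l * μ[X] + 1 := by
        rw [integral_add hlin hquad, integral_sub (integrable_const 1)
          ((hX.integrable one_le_two).const_mul l), integral_const_mul, integral_const_mul]
        simp only [integral_const, probReal_univ, one_smul]
        ring
    _ ≤ _ := Real.add_one_le_exp _

variable {ι : Type*} [Fintype ι]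

lemma measureReal_exists_exists_mem_le {κ : Type*} (s : Finset κ) {A : ι → κ → Ω → Prop}
    {ε : ℝ} (hA : ∀ i, ∀ j ∈ s, μ.real {ω | A i j ω} ≤ ε) :
    μ.real {ω | ∃ i, ∃ j ∈ s, A i j ω} ≤ Fintype.card ι * s.card * ε := by
  have hunion : {ω | ∃ i, ∃ j ∈ s, A i j ω} = ⋃ i, ⋃ j ∈ s, {ω | A i j ω} := by
    ext ω
    simp
  calc μ.real {ω | ∃ i, ∃ j ∈ s, A i j ω} ≤ ∑ i, ∑ j ∈ s, μ.real {ω | A i j ω} := by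
        rw [hunion]
        exact (measureReal_iUnion_fintype_le _).trans
          (Finset.sum_le_sum fun i _ => measureReal_biUnion_finset_le s _)
    _ ≤ ∑ _i : ι, ∑ _j ∈ s, ε := Finset.sum_le_sum fun i _ => Finset.sum_le_sum (hA i)
    _ = Fintype.card ι * s.card * ε := by simp [mul_assoc]

variable {X : ι → Ω → ℝ}

lemma measureReal_le_sum_le_exp (hindep : iIndepFun X μ) (hX : ∀ i, AEMeasurable (X i) μ)
    {l : ℝ} (hl : 0 ≤ l) (hint : ∀ i, Integrable (fun ω => Real.exp (l * X i ω)) μ)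
    {κ : ι → ℝ} (hκ : ∀ i, mgf (X i) μ l ≤ Real.exp (κ i)) (a : ℝ) :
    μ.real {ω | a ≤ ∑ i, X i ω} ≤ Real.exp (∑ i, κ i - l * a) := by
  have := hindep.isProbabilityMeasure
  have hmgf : mgf (fun ω => ∑ i, X i ω) μ l = ∏ i, mgf (X i) μ l := by
    rw [← hindep.mgf_sum₀ hX]
    congr! 1
    ext ω
    simp
  have hintsum : Integrable (fun ω => Real.exp (l * ∑ i, X i ω)) μ := by
    refine .of_integral_ne_zero (hmgf.trans_ne ?_)
    exact (Finset.prod_pos fun i _ => mgf_pos (hint i)).ne'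
  calc μ.real {ω | a ≤ ∑ i, X i ω}
      ≤ Real.exp (-l * a) * mgf (fun ω => ∑ i, X i ω) μ l :=
        measure_ge_le_exp_mul_mgf a hl hintsum
    _ = Real.exp (-l * a) * ∏ i, mgf (X i) μ l := by rw [hmgf]
    _ ≤ Real.exp (-l * a) * ∏ i, Real.exp (κ i) := by
        gcongr with i
        · exact fun i _ => mgf_nonneg
        · exact hκ i
    _ = Real.exp (∑ i, κ i - l * a) := by
        rw [← Real.exp_sum, ← Real.exp_add]
        ring_nf

lemma measureReal_le_sum_le_exp_of_le (hindep : iIndepFun X μ) (hX : ∀ i, MemLp (X i) 2 μ)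
    (hmean : ∀ i, μ[X i] = 0) {b : ℝ} (hb0 : 0 ≤ b) (hb : ∀ i, ∀ᵐ ω ∂μ, X i ω ≤ b)
    {s t : ℝ} (hs : 0 < s) (hvar : ∑ i, ∫ ω, X i ω ^ 2 ∂μ ≤ s ^ 2) (ht : 0 ≤ t) :
    μ.real {ω | s * t + b * t ^ 2 / 6 ≤ ∑ i, X i ω} ≤ Real.exp (-(t ^ 2 / 2)) := by
  have := hindep.isProbabilityMeasure
  set l := 3 * t / (3 * s + b * t) with hl_def
  have hl : 0 ≤ l := by positivity
  have hlb : 1 - l * b / 3 = 3 * s / (3 * s + b * t) := by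
    rw [hl_def]
    field_simp
    ring
  have hlb3 : l * b < 3 := by
    have : 0 < 1 - l * b / 3 := by rw [hlb]; positivity
    linarith
  refine (measureReal_le_sum_le_exp hindep (fun i => (hX i).aemeasurable) hl
    (fun i => integrable_exp_mul_of_le (hX i).aemeasurable (hb i) hl)
    (fun i => mgf_le_exp_of_le (hX i) (hmean i) (hb i) hb0 hl hlb3) _).trans ?_
  rw [← Finset.mul_sum, hlb, Real.exp_le_exp]
  calc l ^ 2 / (2 * (3 * s / (3 * s + b * t))) * ∑ i, ∫ ω, X i ω ^ 2 ∂μ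
        - l * (s * t + b * t ^ 2 / 6)
      ≤ l ^ 2 / (2 * (3 * s / (3 * s + b * t))) * s ^ 2 - l * (s * t + b * t ^ 2 / 6) := by gcongr
    _ = -(t ^ 2 / 2) := by
        rw [hl_def]
        field_simp
        ring

lemma measureReal_sum_le_le_exp_of_nonneg (hindep : iIndepFun X μ) (hX : ∀ i, MemLp (X i) 2 μ)
    (hX0 : ∀ i, ∀ᵐ ω ∂μ, 0 ≤ X i ω) {s t : ℝ} (hs : 0 < s)
    (hsq : ∑ i, ∫ ω, X i ω ^ 2 ∂μ ≤ s ^ 2) (ht : 0 ≤ t) :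
    μ.real {ω | ∑ i, X i ω ≤ ∑ i, μ[X i] - s * t} ≤ Real.exp (-(t ^ 2 / 2)) := by
  have := hindep.isProbabilityMeasure
  have hl : 0 ≤ t / s := by positivity
  have hchernoff := measureReal_le_sum_le_exp (X := fun i => -X i)
    (hindep.comp (fun _ x => -x) fun _ => measurable_neg) (fun i => (hX i).aemeasurable.neg) hl
    (fun i => integrable_exp_mul_of_le (b := 0) (hX i).aemeasurable.neg (by simpa using hX0 i) hl)
    (fun i => mgf_neg_le_exp_of_nonneg (hX i) (hX0 i) hl) (s * t - ∑ i, μ[X i])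
  have hevent : {ω | ∑ i, X i ω ≤ ∑ i, μ[X i] - s * t}
      = {ω | s * t - ∑ i, μ[X i] ≤ ∑ i, (-X i) ω} := by
    ext ω
    simp only [Set.mem_ofPred_eq, Pi.neg_apply, Finset.sum_neg_distrib]
    constructor <;> intro h <;> linarith
  rw [hevent]
  refine hchernoff.trans (Real.exp_le_exp.2 ?_)
  rw [Finset.sum_sub_distrib, ← Finset.mul_sum, ← Finset.mul_sum]
  calc (t / s) ^ 2 / 2 * ∑ i, ∫ ω, X i ω ^ 2 ∂μ - t / s * ∑ i, μ[X i]
        - t / s * (s * t - ∑ i, μ[X i])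
      ≤ (t / s) ^ 2 / 2 * s ^ 2 - t / s * ∑ i, μ[X i] - t / s * (s * t - ∑ i, μ[X i]) := by gcongr
    _ = -(t ^ 2 / 2) := by
        field_simp
        ring

end TailBounds

section ConfidenceLevel

lemma exp_neg_add_exp_neg_le {L : ℝ} (hL : 9 / 10 ≤ L) :
    Real.exp (-L) + Real.exp (-((4 / 3) ^ 2 * L)) ≤ 3 / 2 * Real.exp (-L) := by
  have hsplit : -((4 / 3) ^ 2 * L) ≤ -Real.log 2 + -L := by linarith [Real.log_two_lt_d9]
  have hhalf := Real.exp_le_exp.2 hsplit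
  rw [Real.exp_add, Real.exp_neg (Real.log 2), Real.exp_log two_pos] at hhalf
  linarith

lemma inv_one_add_add_exp_neg_le {L : ℝ} (hL : Real.log (3 / 2) ≤ L) (hL' : L ≤ 9 / 10) :
    (1 + 2 * L)⁻¹ + Real.exp (-((3 / 2) ^ 2 * L)) ≤ 3 / 2 * Real.exp (-L) := by
  have hL0 : 1 / 3 ≤ L := by
    have := Real.one_sub_inv_le_log_of_pos (show (0 : ℝ) < 3 / 2 by norm_num)
    linarith
  have hinv : (1 + 2 * L)⁻¹ ≤ 0.89 * Real.exp (-L) := by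
    have hexp := exp_le_one_add_add_sq_div hL' (by norm_num) (by norm_num)
    rw [Real.exp_neg, ← div_eq_mul_inv, inv_eq_one_div, div_le_div_iff₀ (by linarith)
      (by positivity)]
    norm_num at hexp ⊢
    nlinarith [mul_nonneg (sub_nonneg.2 hL0) (sub_nonneg.2 hL')]
  have hexp : Real.exp (-(5 / 4 * L)) ≤ 0.61 := by
    refine le_of_pow_le_pow_left₀ four_ne_zero (by norm_num) ?_
    calc Real.exp (-(5 / 4 * L)) ^ 4 = Real.exp (-L) ^ 5 := by
          rw [← Real.exp_nat_mul, ← Real.exp_nat_mul]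
          push_cast
          ring_nf
      _ ≤ (2 / 3) ^ 5 := by
          gcongr
          rw [Real.exp_neg, inv_le_comm₀ (Real.exp_pos L) (by norm_num), inv_div]
          exact (Real.log_le_iff_le_exp (by norm_num)).1 hL
      _ ≤ 0.61 ^ 4 := by norm_num
  calc (1 + 2 * L)⁻¹ + Real.exp (-((3 / 2) ^ 2 * L))
      = (1 + 2 * L)⁻¹ + Real.exp (-(5 / 4 * L)) * Real.exp (-L) := by
        rw [← Real.exp_add]
        ring_nf
    _ ≤ 0.89 * Real.exp (-L) + 0.61 * Real.exp (-L) := by gcongr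
    _ = 3 / 2 * Real.exp (-L) := by ring

lemma mul_mul_exp_neg_log_le {α : ℝ} (hα : 0 < α) (T S : ℕ) :
    T * S * (3 / 2 * Real.exp (-Real.log (3 * T * S / (2 * α)))) ≤ α := by
  rcases eq_or_ne ((T : ℝ) * S) 0 with hTS | hTS
  · rw [hTS, zero_mul]
    exact hα.le
  · have hpos : 0 < 3 * (T : ℝ) * S / (2 * α) := by
      rw [mul_assoc]
      positivity
    rw [Real.exp_neg, Real.exp_log hpos]
    field_simp
    exact div_self_le_one _

end ConfidenceLevel

section Inversion

-- With `S = ∑ Xᵢ`, `W = ∑ Xᵢ²` and `s²` the sum of the variances, the true scale `s` in the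
-- deviation bound `hS` is replaced by its empirical counterpart, using the lower bound `hW`.
lemma le_sqrt_sub_sq_div_mul_add {S W N s l β k : ℝ} (hβ0 : 0 ≤ β) (hβ1 : β ≤ 1) (hN : 0 < N)
    (hl : 0 ≤ l) (hS : S ≤ s * l + β * l ^ 2 / 6) (hW : s ^ 2 - k * s * l ≤ W)
    (hs : 9 / 4 * s ^ 2 ≤ N * ((3 / 2 - β / 6) ^ 3 * (3 / 2 - β / 6 - k))) :
    S ≤ √(W - S ^ 2 / N) * l + 3 / 2 * l ^ 2 := by
  -- `a * l ^ 2` is the part of the additive term `3 / 2 * l ^ 2` not spent on `β * l ^ 2 / 6`.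
  obtain ⟨a, ha⟩ : ∃ a, a = 3 / 2 - β / 6 := ⟨_, rfl⟩
  rw [← ha] at hs
  have ha0 : 0 < a := by linarith
  rcases le_or_gt S 0 with hS0 | hS0
  · exact hS0.trans (by positivity)
  have hSa : S ≤ (s - a * l) * l + 3 / 2 * l ^ 2 := by
    rw [ha]
    linarith
  refine hSa.trans ?_
  gcongr
  rcases le_or_gt s (a * l) with hsl | hsl
  · exact (sub_nonpos.2 hsl).trans (Real.sqrt_nonneg _)
  have hka : k ≤ a := by
    refine sub_nonneg.1 (nonneg_of_mul_nonneg_right (a := N * a ^ 3) ?_ (by positivity))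
    linarith [sq_nonneg s]
  have haS : a * S ≤ 3 / 2 * s * l := by
    calc a * S ≤ a * (s * l + β * l ^ 2 / 6) := by gcongr
      _ = 3 / 2 * s * l - β / 6 * l * (s - a * l) := by
        rw [ha]
        ring
      _ ≤ 3 / 2 * s * l := sub_le_self _ (by positivity)
  have hdev : S ^ 2 / N ≤ l ^ 2 * (a * (a - k)) := by
    rw [div_le_iff₀ hN]
    refine le_of_mul_le_mul_left ?_ (show 0 < a ^ 2 by positivity)
    calc a ^ 2 * S ^ 2 = (a * S) ^ 2 := by ring
      _ ≤ (3 / 2 * s * l) ^ 2 := by gcongr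
      _ = l ^ 2 * (9 / 4 * s ^ 2) := by ring
      _ ≤ l ^ 2 * (N * (a ^ 3 * (a - k))) := by gcongr
      _ = a ^ 2 * (l ^ 2 * (a * (a - k)) * N) := by ring
  have hgap : 0 ≤ l * (s - a * l) * (2 * a - k) :=
    mul_nonneg (by positivity) (by linarith)
  exact Real.le_sqrt_of_sq_le (by linarith)

lemma sq_le_mul_cube_mul_sub_four_thirds_mul_max {b s N : ℝ} (hb0 : 0 ≤ b) (hb1 : b ≤ 1)
    (hN : 0 ≤ N) (hs : s ^ 2 ≤ N * (b * (1 - b))) :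
    9 / 4 * s ^ 2
      ≤ N * ((3 / 2 - b / 6) ^ 3 * (3 / 2 - b / 6 - 4 / 3 * max b (1 - b))) := by
  have hcube : 2 ≤ (3 / 2 - b / 6) ^ 3 := by
    calc (2 : ℝ) ≤ (4 / 3) ^ 3 := by norm_num
      _ ≤ (3 / 2 - b / 6) ^ 3 := by gcongr; linarith
  have hgap : 9 / 8 * (b * (1 - b)) ≤ 3 / 2 - b / 6 - 4 / 3 * max b (1 - b) := by
    rcases le_total b (1 - b) with h | h
    · rw [max_eq_right h]
      nlinarith
    · rw [max_eq_left h]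
      nlinarith
  calc 9 / 4 * s ^ 2 ≤ 9 / 4 * (N * (b * (1 - b))) := by gcongr
    _ = N * (2 * (9 / 8 * (b * (1 - b)))) := by ring
    _ ≤ _ := by gcongr

lemma sq_le_mul_cube_mul_sub_three_halves_mul_max {b s N : ℝ} (hb0 : 0 ≤ b) (hb1 : b ≤ 1)
    (hN : 0 ≤ N) (hs : s ^ 2 ≤ N * (b * (1 - b))) :
    9 / 4 * s ^ 2 ≤ N * ((3 / 2) ^ 3 * (3 / 2 - 3 / 2 * max b (1 - b))) := by
  have hgap : b * (1 - b) ≤ 1 - max b (1 - b) := by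
    rcases le_total b (1 - b) with h | h
    · rw [max_eq_right h]
      nlinarith
    · rw [max_eq_left h]
      nlinarith
  calc 9 / 4 * s ^ 2 ≤ 9 / 4 * (N * (b * (1 - b))) := by gcongr
    _ ≤ 81 / 16 * (N * (b * (1 - b))) := by
      gcongr ?_ * _
      norm_num
    _ ≤ 81 / 16 * (N * (1 - max b (1 - b))) := by gcongr
    _ = N * ((3 / 2) ^ 3 * (3 / 2 - 3 / 2 * max b (1 - b))) := by ring

end Inversion

section EmpiricalBernsteinBound

open scoped BigOperators

variable {ι : Type*} [Fintype ι]

/-- The empirical variance of a finite sample `x`, normalised by the sample size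
(not by the sample size minus one). -/
noncomputable def sampleVariance (x : ι → ℝ) : ℝ :=
  𝔼 i, (x i - 𝔼 j, x j) ^ 2

/-- The empirical Bernstein lower confidence bound for the mean of variables ranging over an
interval of length `R`, at confidence parameter `L` (failure probability of order `exp (-L)`). -/
noncomputable def empiricalBernsteinLower (x : ι → ℝ) (R L : ℝ) : ℝ :=
  𝔼 i, x i - (√(sampleVariance x) * √(2 * L / Fintype.card ι) + 3 * R * L / Fintype.card ι)

lemma card_mul_sampleVariance (x : ι → ℝ) :
    Fintype.card ι * sampleVariance x = ∑ i, x i ^ 2 - (∑ i, x i) ^ 2 / Fintype.card ι := by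
  rw [sampleVariance, Fintype.card_mul_expect]
  simp only [sub_sq, Finset.sum_add_distrib, Finset.sum_sub_distrib, ← Finset.sum_mul,
    ← Finset.mul_sum, Finset.sum_const, Finset.card_univ, nsmul_eq_mul]
  rw [Fintype.expect_eq_sum_div_card]
  rcases eq_or_ne (Fintype.card ι : ℝ) 0 with h | h
  · simp [h]
  · field_simp
    ring

lemma empiricalBernsteinLower_sub_div [Nonempty ι] (x : ι → ℝ) (m L : ℝ) {R : ℝ} (hR : 0 < R) :
    empiricalBernsteinLower (fun i => (x i - m) / R) 1 L
      = (empiricalBernsteinLower x R L - m) / R := by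
  have hmean : 𝔼 i, (x i - m) / R = (𝔼 i, x i - m) / R := by
    rw [← Finset.expect_div, Finset.expect_sub_distrib, Fintype.expect_const]
  have hvar : sampleVariance (fun i => (x i - m) / R) = sampleVariance x / R ^ 2 := by
    simp only [sampleVariance, hmean, Finset.expect_div]
    congr! 2
    ring
  rw [empiricalBernsteinLower, empiricalBernsteinLower, hmean, hvar,
    Real.sqrt_div' _ (sq_nonneg R), Real.sqrt_sq hR.le]
  field_simp
  ring

lemma empiricalBernsteinLower_one_nonpos [Nonempty ι] {x : ι → ℝ} {L s β k : ℝ} (hL : 0 ≤ L)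
    (hβ0 : 0 ≤ β) (hβ1 : β ≤ 1)
    (hs : 9 / 4 * s ^ 2 ≤ Fintype.card ι * ((3 / 2 - β / 6) ^ 3 * (3 / 2 - β / 6 - k)))
    (hsum : ∑ i, x i ≤ s * √(2 * L) + β * √(2 * L) ^ 2 / 6)
    (hsq : s ^ 2 - k * s * √(2 * L) ≤ ∑ i, x i ^ 2) :
    empiricalBernsteinLower x 1 L ≤ 0 := by
  have hN : (0 : ℝ) < Fintype.card ι := by exact_mod_cast Fintype.card_pos
  have hdev := le_sqrt_sub_sq_div_mul_add hβ0 hβ1 hN (Real.sqrt_nonneg _) hsum hsq hs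
  rw [← card_mul_sampleVariance, Real.sqrt_mul hN.le, Real.sq_sqrt (by positivity)] at hdev
  have hmean : 𝔼 i, x i = (∑ i, x i) / Fintype.card ι := Fintype.expect_eq_sum_div_card x
  rw [empiricalBernsteinLower, hmean, Real.sqrt_div' _ hN.le, sub_nonpos, div_le_iff₀ hN]
  refine hdev.trans_eq ?_
  have hsqrt : √(Fintype.card ι : ℝ) ^ 2 = Fintype.card ι := Real.sq_sqrt hN.le
  field_simp
  linear_combination √(sampleVariance x) * √(2 * L) * hsqrt

end EmpiricalBernsteinBound

section EmpiricalBernstein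

variable {Ω : Type*} {mΩ : MeasurableSpace Ω} {μ : Measure Ω} [IsProbabilityMeasure μ]

lemma integral_sq_sq_le_of_abs_le {X : Ω → ℝ} {g : ℝ} (hX : AEMeasurable X μ)
    (hg : ∀ᵐ ω ∂μ, |X ω| ≤ g) : ∫ ω, (X ω ^ 2) ^ 2 ∂μ ≤ g ^ 2 * ∫ ω, X ω ^ 2 ∂μ := by
  rw [← integral_const_mul]
  refine integral_mono_of_nonneg (Filter.Eventually.of_forall fun ω => by positivity) ?_ ?_
  · exact (MemLp.of_bound hX.aestronglyMeasurable g hg).integrable_sq.const_mul _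
  · filter_upwards [hg] with ω hω
    rw [pow_two (X ω ^ 2)]
    exact mul_le_mul_of_nonneg_right (sq_le_sq' (neg_le_of_abs_le hω) (le_of_abs_le hω))
      (sq_nonneg _)

variable {ι : Type*} [Fintype ι] {X : ι → Ω → ℝ}

lemma measureReal_sum_sq_le_le_exp (hindep : iIndepFun X μ) (hX : ∀ i, AEMeasurable (X i) μ)
    {g : ℝ} (hg0 : 0 < g) (hg : ∀ i, ∀ᵐ ω ∂μ, |X i ω| ≤ g) {s t : ℝ} (hs : 0 < s)
    (hsq : ∑ i, ∫ ω, X i ω ^ 2 ∂μ = s ^ 2) (ht : 0 ≤ t) :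
    μ.real {ω | ∑ i, X i ω ^ 2 ≤ s ^ 2 - g * s * t} ≤ Real.exp (-(t ^ 2 / 2)) := by
  rw [← hsq]
  refine measureReal_sum_le_le_exp_of_nonneg (X := fun i ω => X i ω ^ 2)
    (hindep.comp (fun _ x => x ^ 2) fun _ => by fun_prop) (fun i => ?_)
    (fun i => .of_forall fun ω => sq_nonneg _) (by positivity) ?_ ht
  · refine .of_bound (by fun_prop) (g ^ 2) ?_
    filter_upwards [hg i] with ω hω
    rw [norm_pow, Real.norm_eq_abs]
    gcongr
  · calc ∑ i, ∫ ω, (X i ω ^ 2) ^ 2 ∂μ ≤ ∑ i, g ^ 2 * ∫ ω, X i ω ^ 2 ∂μ :=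
          Finset.sum_le_sum fun i _ => integral_sq_sq_le_of_abs_le (hX i) (hg i)
      _ = (g * s) ^ 2 := by rw [← Finset.mul_sum, hsq, mul_pow]

lemma measureReal_le_sum_le_inv_one_add_sq (hindep : iIndepFun X μ) (hX : ∀ i, MemLp (X i) 2 μ)
    (hmean : ∀ i, μ[X i] = 0) {s t : ℝ} (hs : 0 < s) (hsq : ∑ i, ∫ ω, X i ω ^ 2 ∂μ = s ^ 2)
    (ht : 0 < t) : μ.real {ω | s * t ≤ ∑ i, X i ω} ≤ (1 + t ^ 2)⁻¹ := by
  have hsum : MemLp (∑ i, X i) 2 μ := memLp_finsetSum' _ fun i _ => hX i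
  have hmean_sum : μ[∑ i, X i] = 0 := by
    simp only [Finset.sum_apply]
    rw [integral_finsetSum _ fun i _ => (hX i).integrable one_le_two]
    exact Finset.sum_eq_zero fun i _ => hmean i
  have hvar_sum : Var[∑ i, X i; μ] = s ^ 2 := by
    rw [IndepFun.variance_sum (fun i _ => hX i) fun i _ j _ hij => hindep.indepFun hij, ← hsq]
    exact Finset.sum_congr rfl fun i _ =>
      variance_of_integral_eq_zero (hX i).aemeasurable (hmean i)
  have hcantelli := measureReal_add_le_le_variance_div hsum (t := s * t) (by positivity)
  rw [hmean_sum, hvar_sum, zero_add] at hcantelli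
  simp only [Finset.sum_apply] at hcantelli
  refine hcantelli.trans_eq ?_
  field_simp

lemma abs_le_max_of_mem_Icc {x b : ℝ} (hx : x ∈ Set.Icc (b - 1) b) : |x| ≤ max b (1 - b) :=
  abs_le.2 ⟨by linarith [hx.1, le_max_right b (1 - b)], hx.2.trans (le_max_left _ _)⟩

lemma sum_integral_sq_le_of_mem_Icc {b : ℝ} (hX : ∀ i, AEMeasurable (X i) μ)
    (hmem : ∀ i, ∀ᵐ ω ∂μ, X i ω ∈ Set.Icc (b - 1) b) (hmean : ∀ i, μ[X i] = 0) :
    ∑ i, ∫ ω, X i ω ^ 2 ∂μ ≤ Fintype.card ι * (b * (1 - b)) := by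
  rw [← nsmul_eq_mul]
  refine Finset.sum_le_card_nsmul _ _ _ fun i _ => ?_
  have hvar := variance_le_sub_mul_sub (hmem i) (hX i)
  rw [variance_of_integral_eq_zero (hX i) (hmean i), hmean i] at hvar
  linarith

variable [Nonempty ι] {b s L : ℝ}

lemma measureReal_empiricalBernsteinLower_pos_le_add_exp (hindep : iIndepFun X μ)
    (hX : ∀ i, AEMeasurable (X i) μ) (hmem : ∀ i, ∀ᵐ ω ∂μ, X i ω ∈ Set.Icc (b - 1) b)
    (hs : 0 < s) (hsq : ∑ i, ∫ ω, X i ω ^ 2 ∂μ = s ^ 2) (hL : 0 ≤ L)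
    {β κ p : ℝ} (hβ0 : 0 ≤ β) (hβ1 : β ≤ 1) (hκ : 0 ≤ κ)
    (hsβ : 9 / 4 * s ^ 2
      ≤ Fintype.card ι * ((3 / 2 - β / 6) ^ 3 * (3 / 2 - β / 6 - κ * max b (1 - b))))
    (hp : μ.real {ω | s * √(2 * L) + β * √(2 * L) ^ 2 / 6 ≤ ∑ i, X i ω} ≤ p) :
    μ.real {ω | 0 < empiricalBernsteinLower (X · ω) 1 L} ≤ p + Real.exp (-(κ ^ 2 * L)) := by
  have hmax : 0 < max b (1 - b) := by
    linarith [le_max_left b (1 - b), le_max_right b (1 - b)]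
  have hlower := measureReal_sum_sq_le_le_exp hindep hX hmax
    (fun i => (hmem i).mono fun ω => abs_le_max_of_mem_Icc) hs hsq
    (t := κ * √(2 * L)) (by positivity)
  have hlevel : (κ * √(2 * L)) ^ 2 / 2 = κ ^ 2 * L := by
    rw [mul_pow, Real.sq_sqrt (by positivity)]
    ring
  rw [hlevel] at hlower
  refine le_trans (measureReal_mono fun ω hω => ?_)
    ((measureReal_union_le _ _).trans (add_le_add hp hlower))
  simp only [Set.mem_union, Set.mem_ofPred_eq] at hω ⊢
  by_contra! hcon
  refine hω.not_ge (empiricalBernsteinLower_one_nonpos hL hβ0 hβ1 hsβ hcon.1.le ?_)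
  linarith [hcon.2]

lemma measureReal_empiricalBernsteinLower_pos_le_of_nine_tenths_le (hindep : iIndepFun X μ)
    (hX : ∀ i, AEMeasurable (X i) μ) (hb0 : 0 ≤ b) (hb1 : b ≤ 1)
    (hmem : ∀ i, ∀ᵐ ω ∂μ, X i ω ∈ Set.Icc (b - 1) b) (hmean : ∀ i, μ[X i] = 0)
    (hs : 0 < s) (hsq : ∑ i, ∫ ω, X i ω ^ 2 ∂μ = s ^ 2) (hL : 9 / 10 ≤ L) :
    μ.real {ω | 0 < empiricalBernsteinLower (X · ω) 1 L} ≤ 3 / 2 * Real.exp (-L) := by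
  have hsb := sum_integral_sq_le_of_mem_Icc hX hmem hmean
  have hlevel : √(2 * L) ^ 2 / 2 = L := by
    rw [Real.sq_sqrt (by linarith), mul_div_cancel_left₀ _ two_ne_zero]
  have hbernstein := measureReal_le_sum_le_exp_of_le hindep
    (fun i => memLp_of_bounded (hmem i) (hX i).aestronglyMeasurable 2) hmean hb0
    (fun i => (hmem i).mono fun ω hω => hω.2) hs hsq.le (Real.sqrt_nonneg (2 * L))
  rw [hlevel] at hbernstein
  exact (measureReal_empiricalBernsteinLower_pos_le_add_exp hindep hX hmem hs hsq (by linarith)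
    hb0 hb1 (by norm_num) (sq_le_mul_cube_mul_sub_four_thirds_mul_max hb0 hb1
      (Nat.cast_nonneg _) (hsq ▸ hsb)) hbernstein).trans (exp_neg_add_exp_neg_le hL)

lemma measureReal_empiricalBernsteinLower_pos_le_of_le_nine_tenths (hindep : iIndepFun X μ)
    (hX : ∀ i, AEMeasurable (X i) μ) (hb0 : 0 ≤ b) (hb1 : b ≤ 1)
    (hmem : ∀ i, ∀ᵐ ω ∂μ, X i ω ∈ Set.Icc (b - 1) b) (hmean : ∀ i, μ[X i] = 0)
    (hs : 0 < s) (hsq : ∑ i, ∫ ω, X i ω ^ 2 ∂μ = s ^ 2) (hL : Real.log (3 / 2) ≤ L)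
    (hL' : L ≤ 9 / 10) :
    μ.real {ω | 0 < empiricalBernsteinLower (X · ω) 1 L} ≤ 3 / 2 * Real.exp (-L) := by
  have hsb := sum_integral_sq_le_of_mem_Icc hX hmem hmean
  have hL0 : 0 < L := (Real.log_pos (by norm_num)).trans_le hL
  have hcantelli := measureReal_le_sum_le_inv_one_add_sq hindep
    (fun i => memLp_of_bounded (hmem i) (hX i).aestronglyMeasurable 2) hmean hs hsq
    (Real.sqrt_pos.2 (by positivity : 0 < 2 * L))
  rw [Real.sq_sqrt (by positivity)] at hcantelli
  refine (measureReal_empiricalBernsteinLower_pos_le_add_exp (β := 0) (κ := 3 / 2) hindep hX hmem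
    hs hsq hL0.le le_rfl zero_le_one (by norm_num) ?_ ?_).trans (inv_one_add_add_exp_neg_le hL hL')
  · rw [zero_div, sub_zero]
    exact sq_le_mul_cube_mul_sub_three_halves_mul_max hb0 hb1 (Nat.cast_nonneg _) (hsq ▸ hsb)
  · rwa [zero_mul, zero_div, add_zero]

lemma measureReal_empiricalBernsteinLower_pos_of_sum_sq_eq_zero (hX : ∀ i, MemLp (X i) 2 μ)
    (hsq : ∑ i, ∫ ω, X i ω ^ 2 ∂μ = 0) (hL : 0 ≤ L) :
    μ.real {ω | 0 < empiricalBernsteinLower (X · ω) 1 L} = 0 := by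
  have hzero (i : ι) : ∀ᵐ ω ∂μ, X i ω = 0 := by
    have hi := (Finset.sum_eq_zero_iff_of_nonneg
      fun i _ => integral_nonneg fun ω => sq_nonneg (X i ω)).1 hsq i (Finset.mem_univ i)
    rw [integral_eq_zero_iff_of_nonneg (fun ω => sq_nonneg _) (hX i).integrable_sq] at hi
    filter_upwards [hi] with ω hω
    exact pow_eq_zero_iff two_ne_zero |>.1 hω
  have hnull : ∀ᵐ ω ∂μ, ¬ 0 < empiricalBernsteinLower (X · ω) 1 L := by
    filter_upwards [ae_all_iff.2 hzero] with ω hω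
    simp only [hω, not_lt]
    exact empiricalBernsteinLower_one_nonpos (s := 0) (β := 0) (k := 0) hL le_rfl zero_le_one
      (by norm_num) (by simp) (by simp)
  exact (measureReal_eq_zero_iff).2 (by simpa [ae_iff] using hnull)

lemma measureReal_empiricalBernsteinLower_pos_le (hindep : iIndepFun X μ)
    (hX : ∀ i, AEMeasurable (X i) μ) (hmem : ∀ i, ∀ᵐ ω ∂μ, X i ω ∈ Set.Icc (b - 1) b)
    (hmean : ∀ i, μ[X i] = 0) (L : ℝ) :
    μ.real {ω | 0 < empiricalBernsteinLower (X · ω) 1 L} ≤ 3 / 2 * Real.exp (-L) := by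
  have hX2 (i : ι) : MemLp (X i) 2 μ := memLp_of_bounded (hmem i) (hX i).aestronglyMeasurable 2
  have hmean_mem : (0 : ℝ) ∈ Set.Icc (b - 1) b := by
    obtain ⟨i⟩ := ‹Nonempty ι›
    rw [← hmean i]
    exact (convex_Icc _ _).integral_mem isClosed_Icc (hmem i) ((hX2 i).integrable one_le_two)
  have hb0 : 0 ≤ b := hmean_mem.2
  have hb1 : b ≤ 1 := sub_nonpos.1 hmean_mem.1
  rcases le_total L (Real.log (3 / 2)) with hL | hL
  · calc μ.real {ω | 0 < empiricalBernsteinLower (X · ω) 1 L} ≤ 1 := measureReal_le_one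
      _ = 3 / 2 * Real.exp (-Real.log (3 / 2)) := by
        rw [Real.exp_neg, Real.exp_log (by norm_num)]
        norm_num
      _ ≤ 3 / 2 * Real.exp (-L) := by gcongr
  have hL0 : 0 ≤ L := (Real.log_nonneg (by norm_num)).trans hL
  have hsum : 0 ≤ ∑ i, ∫ ω, X i ω ^ 2 ∂μ := by positivity
  rcases hsum.eq_or_lt with hzero | hpos
  · rw [measureReal_empiricalBernsteinLower_pos_of_sum_sq_eq_zero hX2 hzero.symm hL0]
    positivity
  have hs := Real.sqrt_pos.2 hpos
  have hsq := (Real.sq_sqrt hsum).symm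
  rcases le_total L (9 / 10) with hL' | hL'
  · exact measureReal_empiricalBernsteinLower_pos_le_of_le_nine_tenths hindep hX hb0 hb1 hmem hmean
      hs hsq hL hL'
  · exact measureReal_empiricalBernsteinLower_pos_le_of_nine_tenths_le hindep hX hb0 hb1 hmem hmean
      hs hsq hL'

theorem measureReal_lt_empiricalBernsteinLower_le (hindep : iIndepFun X μ)
    (hX : ∀ i, AEMeasurable (X i) μ) {a R m : ℝ} (hR : 0 < R)
    (hmem : ∀ i, ∀ᵐ ω ∂μ, X i ω ∈ Set.Icc a (a + R)) (hmean : ∀ i, μ[X i] = m) (L : ℝ) :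
    μ.real {ω | m < empiricalBernsteinLower (X · ω) R L} ≤ 3 / 2 * Real.exp (-L) := by
  have hcentered := measureReal_empiricalBernsteinLower_pos_le (b := (a + R - m) / R)
    (X := fun i ω => (X i ω - m) / R) (hindep.comp (fun _ x => (x - m) / R) fun _ => by fun_prop)
    (fun i => ((hX i).sub_const m).div_const R) (fun i => ?_) (fun i => ?_) L
  · simpa only [empiricalBernsteinLower_sub_div _ m L hR, div_pos_iff_of_pos_right hR, sub_pos]
      using hcentered
  · filter_upwards [hmem i] with ω hω
    rw [Set.mem_Icc, div_sub_one hR.ne', div_le_div_iff_of_pos_right hR,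
      div_le_div_iff_of_pos_right hR]
    exact ⟨by linarith [hω.1], by linarith [hω.2]⟩
  · have hint : Integrable (X i) μ :=
      (memLp_of_bounded (hmem i) (hX i).aestronglyMeasurable 1).integrable le_rfl
    rw [integral_div, integral_sub hint (integrable_const m), hmean i]
    simp

end EmpiricalBernstein

theorem measureReal_pi_lt_empiricalBernsteinLower_le {Ω : Type*} {mΩ : MeasurableSpace Ω}
    (μ : Measure Ω) [IsProbabilityMeasure μ] {ι : Type*} [Fintype ι] [Nonempty ι] {f : Ω → ℝ}
    (hf : AEMeasurable f μ) {a R : ℝ} (hR : 0 < R) (hmem : ∀ᵐ ω ∂μ, f ω ∈ Set.Icc a (a + R))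
    (L : ℝ) :
    (Measure.pi fun _ : ι => μ).real {d | μ[f] < empiricalBernsteinLower (fun i => f (d i)) R L}
      ≤ 3 / 2 * Real.exp (-L) := by
  have hcoord (i : ι) := measurePreserving_eval (fun _ : ι => μ) i
  have hmem_coord (i : ι) :
      ∀ᵐ d ∂Measure.pi fun _ : ι => μ, f (d i) ∈ Set.Icc a (a + R) :=
    (hcoord i).quasiMeasurePreserving.ae hmem
  have hmean (i : ι) : ∫ d, f (d i) ∂(Measure.pi fun _ : ι => μ) = μ[f] :=
    integral_comp_eval (μ := fun _ : ι => μ) hf.aestronglyMeasurable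
  exact measureReal_lt_empiricalBernsteinLower_le (iIndepFun_pi fun _ => hf)
    (fun i => hf.comp_quasiMeasurePreserving (hcoord i).quasiMeasurePreserving) hR hmem_coord
    hmean L

section IPW

variable {𝒳 : Type*} {K dY : ℕ} {e π π₀ : Fin K → 𝒳 → ℝ} {j : Fin dY} {c : ℝ}

lemma psiIPW_eq_mul_div (o : 𝒳 × Fin K × (Fin dY → ℝ)) :
    psiIPW K dY e π j o = π o.2.1 o.1 * (o.2.2 j / e o.2.1 o.1) := by
  simp [psiIPW]

lemma psiIPW_eq_sum (o : 𝒳 × Fin K × (Fin dY → ℝ)) :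
    psiIPW K dY e π j o = ∑ k, π k o.1 / e k o.1 * (if o.2.1 = k then o.2.2 j else 0) := by
  simp [psiIPW_eq_mul_div, div_mul_eq_mul_div, mul_div_assoc]

lemma psiIPW_mem_Icc (hc : 0 < c) (hpos : ∀ k x, c ≤ e k x) (hπ : ∀ k x, π k x ∈ Set.Icc 0 1)
    {o : 𝒳 × Fin K × (Fin dY → ℝ)} (hY : o.2.2 j ∈ Set.Icc 0 1) :
    psiIPW K dY e π j o ∈ Set.Icc 0 (1 / c) := by
  rw [psiIPW_eq_mul_div]
  have hπo := hπ o.2.1 o.1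
  have hdiv0 : 0 ≤ o.2.2 j / e o.2.1 o.1 := div_nonneg hY.1 (hc.le.trans (hpos _ _))
  have hdiv1 : o.2.2 j / e o.2.1 o.1 ≤ 1 / c := div_le_div₀ zero_le_one hY.2 hc (hpos _ _)
  exact ⟨mul_nonneg hπo.1 hdiv0, (mul_le_of_le_one_left hdiv0 hπo.2).trans hdiv1⟩

/-- The IPW score `ψ_j(o, π; e) - (1 + w) ψ_j(o, π₀; e)` of the weighted policy contrast. -/
noncomputable def contrastIPW (e π π₀ : Fin K → 𝒳 → ℝ) (j : Fin dY) (w : ℝ)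
    (o : 𝒳 × Fin K × (Fin dY → ℝ)) : ℝ :=
  psiIPW K dY e π j o - (1 + w) * psiIPW K dY e π₀ j o

lemma contrastIPW_mem_Icc (hc : 0 < c) (hpos : ∀ k x, c ≤ e k x)
    (hπ : ∀ k x, π k x ∈ Set.Icc 0 1) (hπ₀ : ∀ k x, π₀ k x ∈ Set.Icc 0 1) {w : ℝ} (hw : -1 ≤ w)
    {o : 𝒳 × Fin K × (Fin dY → ℝ)} (hY : o.2.2 j ∈ Set.Icc 0 1) :
    contrastIPW e π π₀ j w o ∈ Set.Icc (-((1 + w) / c)) (-((1 + w) / c) + (2 + w) / c) := by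
  have hw1 : 0 ≤ 1 + w := by linarith
  have hψ := psiIPW_mem_Icc hc hpos hπ hY
  have hψ₀ := psiIPW_mem_Icc hc hpos hπ₀ hY
  have hscaled₀ : 0 ≤ (1 + w) * psiIPW K dY e π₀ j o := mul_nonneg hw1 hψ₀.1
  have hscaled₁ : (1 + w) * psiIPW K dY e π₀ j o ≤ (1 + w) / c := by
    rw [div_eq_mul_one_div]
    exact mul_le_mul_of_nonneg_left hψ₀.2 hw1
  have hwidth : -((1 + w) / c) + (2 + w) / c = 1 / c := by ring
  rw [hwidth, contrastIPW]
  exact ⟨by linarith [hψ.1], by linarith [hψ.2]⟩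

open scoped BigOperators in
lemma ChatIPW_eq_empiricalBernsteinLower {n : ℕ} {w α : ℝ} {T S : ℕ}
    (d : Fin n → 𝒳 × Fin K × (Fin dY → ℝ)) :
    ChatIPW K dY n e π π₀ j w c α T S d
      = empiricalBernsteinLower (fun i => contrastIPW e π π₀ j w (d i)) ((2 + w) / c)
          (Real.log (3 * T * S / (2 * α))) := by
  have hmean : DhatIPW K dY n e π π₀ j w d = 𝔼 i, contrastIPW e π π₀ j w (d i) := by
    simp only [DhatIPW, VhatIPW, contrastIPW, Fintype.expect_eq_sum_div_card, Fintype.card_fin,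
      Finset.sum_sub_distrib, ← Finset.mul_sum]
    ring
  have hvar : sigmahatSqIPW K dY n e π π₀ j w d
      = sampleVariance fun i => contrastIPW e π π₀ j w (d i) := by
    rw [sampleVariance, Fintype.expect_eq_sum_div_card, sigmahatSqIPW, hmean, Fintype.card_fin,
      one_div_mul_eq_div]
    simp only [contrastIPW]
  rw [ChatIPW, empiricalBernsteinLower, hmean, hvar, Fintype.card_fin]

variable [MeasurableSpace 𝒳]

lemma measurable_ite_arm_eq (k : Fin K) :
    Measurable fun o : 𝒳 × Fin K × (Fin dY → ℝ) => if o.2.1 = k then o.2.2 j else 0 :=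
  .ite (measurable_snd.fst (measurableSet_singleton k)) (by fun_prop) measurable_const

lemma measurable_psiIPW (he : ∀ k, Measurable (e k)) (hπ : ∀ k, Measurable (π k)) :
    Measurable (psiIPW K dY e π j) := by
  simp only [funext psiIPW_eq_sum]
  exact Finset.measurable_sum _ fun k _ =>
    (((hπ k).div (he k)).comp measurable_fst).mul (measurable_ite_arm_eq k)

/-- The value `E[∑ k, π(k, X) m(k, X)]` of the policy `π` when `m` is the outcome regression;
only the covariate marginal of the observation law `P` matters. -/
noncomputable def policyValue (P : Measure (𝒳 × Fin K × (Fin dY → ℝ))) (m π : Fin K → 𝒳 → ℝ) : ℝ :=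
  ∫ o, ∑ k, π k o.1 * m k o.1 ∂P

variable {P : Measure (𝒳 × Fin K × (Fin dY → ℝ))}

lemma integral_psiIPW {m : Fin K → 𝒳 → ℝ} (hc : 0 < c) (hpos : ∀ k x, c ≤ e k x)
    (he : ∀ k, Measurable (e k)) (hY : Integrable (fun o => o.2.2 j) P)
    (hm : ∀ k, Integrable (fun o => m k o.1) P)
    (hcond : ∀ (k : Fin K) (g : 𝒳 → ℝ), Measurable g → (∃ C, ∀ x, |g x| ≤ C) →
      ∫ o, g o.1 * (if o.2.1 = k then o.2.2 j else 0) ∂P = ∫ o, g o.1 * (e k o.1 * m k o.1) ∂P)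
    (hπmeas : ∀ k, Measurable (π k)) (hπ : ∀ k x, π k x ∈ Set.Icc 0 1) :
    ∫ o, psiIPW K dY e π j o ∂P = policyValue P m π := by
  have hweight_meas (k : Fin K) : Measurable fun x => π k x / e k x := (hπmeas k).div (he k)
  have hweight_le (k : Fin K) (x : 𝒳) : |π k x / e k x| ≤ 1 / c := by
    rw [abs_of_nonneg (div_nonneg (hπ k x).1 (hc.le.trans (hpos k x)))]
    exact div_le_div₀ zero_le_one (hπ k x).2 hc (hpos k x)
  have harm (k : Fin K) : Integrable (fun o => if o.2.1 = k then o.2.2 j else 0) P := by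
    refine hY.mono (measurable_ite_arm_eq k).aestronglyMeasurable (.of_forall fun o => ?_)
    split_ifs <;> simp
  simp only [psiIPW_eq_sum, policyValue]
  rw [integral_finsetSum, integral_finsetSum]
  · refine Finset.sum_congr rfl fun k _ => ?_
    rw [hcond k _ (hweight_meas k) ⟨1 / c, hweight_le k⟩]
    refine integral_congr_ae (.of_forall fun o => ?_)
    have hek : e k o.1 ≠ 0 := (hc.trans_le (hpos k o.1)).ne'
    field_simp
  · exact fun k _ => (hm k).bdd_mul (c := 1) ((hπmeas k).comp measurable_fst).aestronglyMeasurable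
      (.of_forall fun o => abs_le.2 ⟨by linarith [(hπ k o.1).1], (hπ k o.1).2⟩)
  · exact fun k _ => (harm k).bdd_mul (c := 1 / c)
      ((hweight_meas k).comp measurable_fst).aestronglyMeasurable
      (.of_forall fun o => hweight_le k o.1)

lemma integrable_psiIPW [IsFiniteMeasure P] (hc : 0 < c) (hpos : ∀ k x, c ≤ e k x)
    (he : ∀ k, Measurable (e k)) (hY : ∀ᵐ o ∂P, o.2.2 j ∈ Set.Icc 0 1)
    (hπmeas : ∀ k, Measurable (π k)) (hπ : ∀ k x, π k x ∈ Set.Icc 0 1) :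
    Integrable (psiIPW K dY e π j) P :=
  .of_mem_Icc 0 (1 / c) (measurable_psiIPW he hπmeas).aemeasurable
    (hY.mono fun _ => psiIPW_mem_Icc hc hpos hπ)

lemma measureReal_lt_ChatIPW_le [IsProbabilityMeasure P] {m : Fin K → 𝒳 → ℝ} (hc : 0 < c)
    (hpos : ∀ k x, c ≤ e k x) (he : ∀ k, Measurable (e k))
    (hY : ∀ᵐ o ∂P, o.2.2 j ∈ Set.Icc 0 1) (hm : ∀ k, Integrable (fun o => m k o.1) P)
    (hcond : ∀ (k : Fin K) (g : 𝒳 → ℝ), Measurable g → (∃ C, ∀ x, |g x| ≤ C) →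
      ∫ o, g o.1 * (if o.2.1 = k then o.2.2 j else 0) ∂P = ∫ o, g o.1 * (e k o.1 * m k o.1) ∂P)
    (hπmeas : ∀ k, Measurable (π k)) (hπ : ∀ k x, π k x ∈ Set.Icc 0 1)
    (hπ₀meas : ∀ k, Measurable (π₀ k)) (hπ₀ : ∀ k x, π₀ k x ∈ Set.Icc 0 1)
    {w : ℝ} (hw : -1 ≤ w) (α : ℝ) (T S : ℕ) {n : ℕ} (hn : 0 < n) :
    (Measure.pi fun _ : Fin n => P).real
        {d | policyValue P m π - (1 + w) * policyValue P m π₀ < ChatIPW K dY n e π π₀ j w c α T S d}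
      ≤ 3 / 2 * Real.exp (-Real.log (3 * T * S / (2 * α))) := by
  have : Nonempty (Fin n) := Fin.pos_iff_nonempty.1 hn
  have hYint : Integrable (fun o => o.2.2 j) P := .of_mem_Icc 0 1 (by fun_prop) hY
  have hmean : ∫ o, contrastIPW e π π₀ j w o ∂P
      = policyValue P m π - (1 + w) * policyValue P m π₀ := by
    simp only [contrastIPW]
    rw [integral_sub (integrable_psiIPW hc hpos he hY hπmeas hπ)
      ((integrable_psiIPW hc hpos he hY hπ₀meas hπ₀).const_mul _), integral_const_mul,
      integral_psiIPW hc hpos he hYint hm hcond hπmeas hπ,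
      integral_psiIPW hc hpos he hYint hm hcond hπ₀meas hπ₀]
  simp only [ChatIPW_eq_empiricalBernsteinLower, ← hmean]
  exact measureReal_pi_lt_empiricalBernsteinLower_le P
    ((measurable_psiIPW he hπmeas).sub
      ((measurable_psiIPW he hπ₀meas).const_mul (1 + w))).aemeasurable
    (div_pos (by linarith) hc) (hY.mono fun _ => contrastIPW_mem_Icc hc hpos hπ hπ₀ hw) _

end IPW

theorem ipw_joint_finite_sample_lower_bounds_general
    {𝒳 : Type*} [MeasurableSpace 𝒳] {K dY : ℕ}
    (P : Measure (𝒳 × Fin K × (Fin dY → ℝ))) [IsProbabilityMeasure P]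
    {e : Fin K → 𝒳 → ℝ} {μreg : Fin dY → Fin K → 𝒳 → ℝ} {𝒮 : Finset (Fin dY)} {c : ℝ} (hc : 0 < c)
    (hpos : ∀ k x, c ≤ e k x) (hemeas : ∀ k, Measurable (e k))
    (hμint : ∀ j ∈ 𝒮, ∀ k, Integrable (fun o => μreg j k o.1) P)
    (hY : ∀ j ∈ 𝒮, ∀ᵐ o ∂P, o.2.2 j ∈ Set.Icc (0 : ℝ) 1)
    (hcond : ∀ j ∈ 𝒮, ∀ (k : Fin K) (g : 𝒳 → ℝ), Measurable g → (∃ C, ∀ x, |g x| ≤ C) →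
      ∫ o, g o.1 * (if o.2.1 = k then o.2.2 j else 0) ∂P
        = ∫ o, g o.1 * (e k o.1 * μreg j k o.1) ∂P)
    {ι : Type*} [Fintype ι] {Pi : ι → Fin K → 𝒳 → ℝ} {π₀ : Fin K → 𝒳 → ℝ}
    (hPimeas : ∀ p k, Measurable (Pi p k)) (hπ₀meas : ∀ k, Measurable (π₀ k))
    (hPi : ∀ p k x, Pi p k x ∈ Set.Icc 0 1) (hπ₀ : ∀ k x, π₀ k x ∈ Set.Icc 0 1)
    {w : Fin dY → ℝ} (hw : ∀ j ∈ 𝒮, -1 ≤ w j) {α : ℝ} (hα : 0 < α) {n : ℕ} (hn : 0 < n) :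
    (Measure.pi fun _ : Fin n => P).real
      {d | ∃ p : ι, ∃ j ∈ 𝒮,
        policyValue P (μreg j) (Pi p) - (1 + w j) * policyValue P (μreg j) π₀
          < ChatIPW K dY n e (Pi p) π₀ j (w j) c α (Fintype.card ι) 𝒮.card d}
      ≤ α :=
  (measureReal_exists_exists_mem_le 𝒮 fun p j hj =>
    measureReal_lt_ChatIPW_le hc hpos hemeas (hY j hj) (hμint j hj) (hcond j hj) (hPimeas p) (hPi p)
      hπ₀meas hπ₀ (hw j hj) α (Fintype.card ι) 𝒮.card hn).trans (mul_mul_exp_neg_log_le hα _ _)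

/-- **Joint finite-sample lower confidence bounds** (Lemma 1 / Statement 3).
Let `Π̃ = {Pi p}_{p : ι}` be a fixed finite set of policies, `π₀` a baseline policy,
`𝒮` the guardrail outcomes and `w_j ∈ [−1,0]`.  Then, under strict positivity, for
every sample size `n`, with `n` i.i.d. observations,
`P(∃ π ∈ Π̃, j ∈ 𝒮 : V_j(π) − (1+w_j) V_j(π₀) < Ĉ_j^{IPW}(π, α)) ≤ α`. -/
theorem ipw_joint_finite_sample_lower_bounds
    {𝒳 : Type*} [MeasurableSpace 𝒳] (K dY : ℕ) (hK : 0 < K)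
    (Pobs : Measure (𝒳 × Fin K × (Fin dY → ℝ))) [IsProbabilityMeasure Pobs]
    (e : Fin K → 𝒳 → ℝ) (μreg : Fin dY → Fin K → 𝒳 → ℝ)
    (c : ℝ) (hc : c ∈ Set.Ioo (0 : ℝ) 1)
    (hpos : ∀ k x, c ≤ e k x)
    (hemeas : ∀ k, Measurable (e k))
    (hμmeas : ∀ j k, Measurable (μreg j k))
    (hμbdd : ∀ j k x, μreg j k x ∈ Set.Icc (0 : ℝ) 1)
    (hY : ∀ᵐ o ∂Pobs, ∀ j, o.2.2 j ∈ Set.Icc (0 : ℝ) 1)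
    (hcond : ∀ (j : Fin dY) (k : Fin K) (g : 𝒳 → ℝ), Measurable g → (∃ C, ∀ x, |g x| ≤ C) →
      ∫ o, g o.1 * (if o.2.1 = k then o.2.2 j else 0) ∂Pobs
        = ∫ o, g o.1 * (e k o.1 * μreg j k o.1) ∂Pobs)
    -- the fixed finite policy class Π̃ and the baseline π₀
    {ι : Type*} [Fintype ι] [Nonempty ι] (Pi : ι → Fin K → 𝒳 → ℝ)
    (π₀ : Fin K → 𝒳 → ℝ)
    (hPimeas : ∀ p k, Measurable (Pi p k)) (hπ₀meas : ∀ k, Measurable (π₀ k))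
    (hPinonneg : ∀ p k x, 0 ≤ Pi p k x) (hPisum : ∀ p x, ∑ k : Fin K, Pi p k x = 1)
    (hπ₀nonneg : ∀ k x, 0 ≤ π₀ k x) (hπ₀sum : ∀ x, ∑ k : Fin K, π₀ k x = 1)
    -- guardrail outcomes and weights
    (𝒮 : Finset (Fin dY)) (h𝒮 : 𝒮.Nonempty)
    (w : Fin dY → ℝ) (hw : ∀ j ∈ 𝒮, w j ∈ Set.Icc (-1 : ℝ) 0)
    (α : ℝ) (hα : α ∈ Set.Ioo (0 : ℝ) 1)
    -- the true policy values
    (V : Fin dY → (Fin K → 𝒳 → ℝ) → ℝ)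
    (hV : ∀ j π, V j π = ∫ o, ∑ k : Fin K, π k o.1 * μreg j k o.1 ∂Pobs)
    (n : ℕ) (hn : 0 < n) :
    ((Measure.pi fun _ : Fin n => Pobs)
      {d | ∃ p : ι, ∃ j ∈ 𝒮,
        V j (Pi p) - (1 + w j) * V j π₀
          < ChatIPW K dY n e (Pi p) π₀ j (w j) c α (Fintype.card ι) 𝒮.card d}).toReal
      ≤ α := by
  simp only [hV]
  exact ipw_joint_finite_sample_lower_bounds_general Pobs hc.1 hpos hemeas
    (fun j _ k => .of_mem_Icc 0 1 ((hμmeas j k).comp measurable_fst).aemeasurable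
      (.of_forall fun o => hμbdd j k o.1))
    (fun j _ => hY.mono fun o ho => ho j) (fun j _ => hcond j) hPimeas hπ₀meas
    (fun p k x => mem_Icc_of_mem_stdSimplex ⟨(hPinonneg p · x), hPisum p x⟩ k)
    (fun k x => mem_Icc_of_mem_stdSimplex ⟨(hπ₀nonneg · x), hπ₀sum x⟩ k)
    (fun j hj => (hw j hj).1) hα.1 hn
end

section
/- Under strict positivity with truth propensity e, for any measurable outcome-regression function m : [K] × 𝒳 → [0,1]^{d_Y} (not necessarily equal to the true conditional mean μ), the doubly-robust score is unbiased for the policy value: E_P[ψ_j^{DR}(O, π; m, e)] = V_j(π) for every policy π and every outcome index j. -/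
set_option autoImplicit false

open MeasureTheory ProbabilityTheory

/-- The doubly-robust score
`ψ_j^{DR}(o, π; m, e) = Σ_k π(k,X) (1[A=k](Y_j − m_j(k,X))/e(k,X) + m_j(k,X))`. -/
noncomputable def psiDR {𝒳 : Type*} (K dY : ℕ)
    (e : Fin K → 𝒳 → ℝ) (m : Fin dY → Fin K → 𝒳 → ℝ)
    (π : Fin K → 𝒳 → ℝ) (j : Fin dY)
    (o : 𝒳 × Fin K × (Fin dY → ℝ)) : ℝ :=
  ∑ k : Fin K, π k o.1 *
    ((if o.2.1 = k then (o.2.2 j - m j k o.1) / e k o.1 else 0) + m j k o.1)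

/- Testing the moment identities against the truncated sign of a regression function `h` shows that
`h(X)` is integrable, so they identify it with the conditional expectation. Given `X`, the residual
`1[A=k](Y - m(X))` then has mean `e(X)(μ(X) - m(X))`. Weighting it by the bounded importance weight
`π(X)/e(X)` leaves `π(X)(μ(X) - m(X))`, and adding `π(X)m(X)` cancels the arbitrary regression `m`,
so each arm of the score has conditional mean `π(X)μ(X)`. -/

section OrderedField

variable {𝕜 : Type*} [Field 𝕜] [LinearOrder 𝕜] [IsStrictOrderedRing 𝕜]

theorem abs_div_le_abs_of_abs_le_mul {a b C : 𝕜} (h : |a| ≤ C * b) : |a / b| ≤ |C| := by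
  rw [abs_div]
  refine div_le_of_le_mul₀ (abs_nonneg b) (abs_nonneg C) ?_
  exact h.trans ((le_abs_self _).trans_eq (abs_mul C b))

theorem div_mul_cancel_of_abs_le_mul {a b C : 𝕜} (h : |a| ≤ C * b) : a / b * b = a :=
  div_mul_cancel_of_imp fun hb => by simpa [hb] using h

theorem abs_le_inv_mul_of_sum_eq_one {ι : Type*} [Fintype ι] {p : ι → 𝕜} (hp : ∀ i, 0 ≤ p i)
    (hsum : ∑ i, p i = 1) {a c : 𝕜} (hc : 0 < c) (hca : c ≤ a) (i : ι) : |p i| ≤ c⁻¹ * a :=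
  calc |p i| = p i := abs_of_nonneg (hp i)
    _ ≤ 1 := hsum ▸ Finset.single_le_sum (fun i _ => hp i) (Finset.mem_univ i)
    _ ≤ c⁻¹ * a := (one_le_inv_mul₀ hc).2 hca

end OrderedField

section Regression

variable {Ω 𝒳 : Type*} {mΩ : MeasurableSpace Ω} [m𝒳 : MeasurableSpace 𝒳]
  {P : Measure Ω} {X : Ω → 𝒳} {Z : Ω → ℝ} {h : 𝒳 → ℝ}

/-- `h` is a regression function of `Z` on `X` under `P`, that is `E[Z | X] = h(X)`, in the weak
sense of moment identities against bounded measurable functions of `X`. Integrability is not part of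
the definition. -/
def IsRegressionFunction (P : Measure Ω) (X : Ω → 𝒳) (Z : Ω → ℝ) (h : 𝒳 → ℝ) : Prop :=
  ∀ g : 𝒳 → ℝ, Measurable g → (∃ C, ∀ x, |g x| ≤ C) →
    ∫ ω, g (X ω) * Z ω ∂P = ∫ ω, g (X ω) * h (X ω) ∂P

namespace IsRegressionFunction

theorem setIntegral_abs_comp_le (hreg : IsRegressionFunction P X Z h) (hX : Measurable X)
    (hh : Measurable h) (hZ : Integrable Z P) (R : ℝ) :
    ∫ ω in X ⁻¹' {x | |h x| ≤ R}, |h (X ω)| ∂P ≤ ∫ ω, |Z ω| ∂P := by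
  set S : Set 𝒳 := {x | |h x| ≤ R}
  have hS : MeasurableSet S := measurableSet_le (by fun_prop) measurable_const
  set g : 𝒳 → ℝ := S.indicator fun x => h x / |h x|
  have hg : Measurable g := Measurable.indicator (by fun_prop) hS
  have hg_le (x : 𝒳) : |g x| ≤ 1 := by
    refine (norm_indicator_le_norm_self (fun x => h x / |h x|) x).trans ?_
    rw [Real.norm_eq_abs, abs_div, abs_abs]
    exact div_self_le_one _
  have hg_mul (x : 𝒳) : g x * h x = S.indicator (fun x => |h x|) x := by
    rw [← Set.indicator_mul_left]
    simp only [div_mul_eq_mul_div, ← abs_mul_abs_self (h _), mul_self_div_self]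
  calc ∫ ω in X ⁻¹' S, |h (X ω)| ∂P
      = ∫ ω, g (X ω) * h (X ω) ∂P := by
        simp only [← integral_indicator (hX hS), hg_mul]
        rfl
    _ = ∫ ω, g (X ω) * Z ω ∂P := (hreg g hg ⟨1, hg_le⟩).symm
    _ ≤ ∫ ω, |Z ω| ∂P := by
        refine (Real.le_norm_self _).trans
          (norm_integral_le_of_norm_le hZ.abs (ae_of_all _ fun ω => ?_))
        rw [Real.norm_eq_abs, abs_mul]
        exact mul_le_of_le_one_left (abs_nonneg _) (hg_le _)

theorem integrable_comp [IsFiniteMeasure P] (hreg : IsRegressionFunction P X Z h)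
    (hX : Measurable X) (hh : Measurable h) (hZ : Integrable Z P) : Integrable (h ∘ X) P := by
  have hcover : AECover P Filter.atTop fun n : ℕ => X ⁻¹' {x | |h x| ≤ n} :=
    { ae_eventually_mem := ae_of_all _ fun ω =>
        (tendsto_natCast_atTop_atTop (R := ℝ)).eventually_ge_atTop |h (X ω)|
      measurableSet := fun n => hX (measurableSet_le (by fun_prop) measurable_const) }
  refine hcover.integrable_of_integral_norm_bounded (∫ ω, |Z ω| ∂P) (fun n => ?_)
    (.of_forall fun n => hreg.setIntegral_abs_comp_le hX hh hZ n)
  exact .of_bound (measure_lt_top _ _) (hh.comp hX).aestronglyMeasurable n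
    (ae_restrict_mem (hcover.measurableSet n))

theorem condExp_ae_eq [IsFiniteMeasure P] (hreg : IsRegressionFunction P X Z h)
    (hX : Measurable X) (hh : Measurable h) (hZ : Integrable Z P) :
    P[Z | m𝒳.comap X] =ᵐ[P] h ∘ X := by
  refine (ae_eq_condExp_of_forall_setIntegral_eq hX.comap_le hZ
    (fun _ _ _ => (hreg.integrable_comp hX hh hZ).integrableOn) ?_
    (hh.comp (comap_measurable X)).aestronglyMeasurable).symm
  rintro _ ⟨B, hB, rfl⟩ -
  have hbdd : ∃ C, ∀ x, |B.indicator (1 : 𝒳 → ℝ) x| ≤ C :=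
    ⟨1, fun x => (norm_indicator_le_norm_self (1 : 𝒳 → ℝ) x).trans_eq norm_one⟩
  have setIntegral_eq (φ : Ω → ℝ) :
      ∫ ω in X ⁻¹' B, φ ω ∂P = ∫ ω, B.indicator 1 (X ω) * φ ω ∂P := by
    rw [← integral_indicator (hX hB)]
    congr! with ω
    by_cases hω : X ω ∈ B <;> simp [hω]
  rw [setIntegral_eq, setIntegral_eq, hreg _ (measurable_one.indicator hB) hbdd]
  rfl

end IsRegressionFunction

theorem condExp_comp_mul_ae_eq {g : 𝒳 → ℝ} (hg : Measurable g) (hgZ : Integrable ((g ∘ X) * Z) P)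
    (hZ : Integrable Z P) (hZh : P[Z | m𝒳.comap X] =ᵐ[P] h ∘ X) :
    P[(g ∘ X) * Z | m𝒳.comap X] =ᵐ[P] (g * h) ∘ X :=
  (condExp_mul_of_stronglyMeasurable_left (hg.comp (comap_measurable X)).stronglyMeasurable
    hgZ hZ).trans (.mul .rfl hZh)

end Regression

section Score

variable {Ω 𝒳 : Type*}

/-- The doubly-robust score `T (Y - m(X)) / e(X) + m(X)` of a single arm, as a random variable. The
real variable `T` stands for the indicator that the arm is chosen. -/
noncomputable def armScore (X : Ω → 𝒳) (T Y : Ω → ℝ) (e m : 𝒳 → ℝ) : Ω → ℝ :=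
  T * (Y - m ∘ X) / (e ∘ X) + m ∘ X

theorem mul_armScore (X : Ω → 𝒳) (T Y : Ω → ℝ) (e m f : 𝒳 → ℝ) :
    (f ∘ X) * armScore X T Y e m = ((f / e) ∘ X) * (T * (Y - m ∘ X)) + (f * m) ∘ X := by
  ext ω
  simp only [armScore, Pi.add_apply, Pi.sub_apply, Pi.mul_apply, Pi.div_apply, Function.comp_apply]
  ring

variable {mΩ : MeasurableSpace Ω} {P : Measure Ω} {X : Ω → 𝒳} {T Y : Ω → ℝ}
  {e μ m f : 𝒳 → ℝ} {C : ℝ}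

theorem integrable_residual (hTY : Integrable (T * Y) P) (hmT : Integrable ((m ∘ X) * T) P) :
    Integrable (T * (Y - m ∘ X)) P := by
  rw [mul_sub, mul_comm T (m ∘ X)]
  exact hTY.sub hmT

variable [m𝒳 : MeasurableSpace 𝒳]

theorem integrable_div_comp_mul {Z : Ω → ℝ} (hX : Measurable X) (he : Measurable e)
    (hf : Measurable f) (hfe : ∀ x, |f x| ≤ C * e x) (hZ : Integrable Z P) :
    Integrable (((f / e) ∘ X) * Z) P :=
  hZ.bdd_mul ((hf.div he).comp hX).aestronglyMeasurable
    (ae_of_all _ fun ω => abs_div_le_abs_of_abs_le_mul (hfe (X ω)))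

theorem condExp_residual_ae_eq (hm : Measurable m)
    (hT : Integrable T P) (hTY : Integrable (T * Y) P) (hmT : Integrable ((m ∘ X) * T) P)
    (hTe : P[T | m𝒳.comap X] =ᵐ[P] e ∘ X) (hTYeμ : P[T * Y | m𝒳.comap X] =ᵐ[P] (e * μ) ∘ X) :
    P[T * (Y - m ∘ X) | m𝒳.comap X] =ᵐ[P] (e * (μ - m)) ∘ X := by
  rw [mul_sub, mul_comm T (m ∘ X), mul_sub, mul_comm e m]
  exact (condExp_sub hTY hmT _).trans (hTYeμ.sub (condExp_comp_mul_ae_eq hm hmT hT hTe))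

theorem integrable_mul_comp_of_abs_le_mul (hX : Measurable X) (he : Measurable e)
    (hm : Measurable m) (hf : Measurable f) (hfe : ∀ x, |f x| ≤ C * e x)
    (hT : Integrable T P) (hmT : Integrable ((m ∘ X) * T) P)
    (hTe : P[T | m𝒳.comap X] =ᵐ[P] e ∘ X) : Integrable ((f * m) ∘ X) P := by
  have hme : Integrable ((m * e) ∘ X) P :=
    integrable_condExp.congr (condExp_comp_mul_ae_eq hm hmT hT hTe)
  convert integrable_div_comp_mul hX he hf hfe hme using 1
  ext ω
  simp only [Function.comp_apply, Pi.mul_apply, Pi.div_apply]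
  rw [mul_comm (m _), ← mul_assoc, div_mul_cancel_of_abs_le_mul (hfe _)]

theorem integrable_mul_armScore (hX : Measurable X) (he : Measurable e) (hm : Measurable m)
    (hf : Measurable f) (hfe : ∀ x, |f x| ≤ C * e x)
    (hT : Integrable T P) (hTY : Integrable (T * Y) P) (hmT : Integrable ((m ∘ X) * T) P)
    (hTe : P[T | m𝒳.comap X] =ᵐ[P] e ∘ X) :
    Integrable ((f ∘ X) * armScore X T Y e m) P := by
  rw [mul_armScore]
  exact (integrable_div_comp_mul hX he hf hfe (integrable_residual hTY hmT)).add
    (integrable_mul_comp_of_abs_le_mul hX he hm hf hfe hT hmT hTe)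

theorem condExp_mul_armScore_ae_eq [IsFiniteMeasure P] (hX : Measurable X) (he : Measurable e)
    (hm : Measurable m) (hf : Measurable f) (hfe : ∀ x, |f x| ≤ C * e x)
    (hT : Integrable T P) (hTY : Integrable (T * Y) P) (hmT : Integrable ((m ∘ X) * T) P)
    (hTe : P[T | m𝒳.comap X] =ᵐ[P] e ∘ X) (hTYeμ : P[T * Y | m𝒳.comap X] =ᵐ[P] (e * μ) ∘ X) :
    P[(f ∘ X) * armScore X T Y e m | m𝒳.comap X] =ᵐ[P] (f * μ) ∘ X := by
  have hres := integrable_residual hTY hmT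
  have hwres := integrable_div_comp_mul hX he hf hfe hres
  have hfm := integrable_mul_comp_of_abs_le_mul hX he hm hf hfe hT hmT hTe
  have hweight : f / e * e = f := funext fun x => div_mul_cancel_of_abs_le_mul (hfe x)
  have hcond_wres : P[((f / e) ∘ X) * (T * (Y - m ∘ X)) | m𝒳.comap X] =ᵐ[P]
      (f * (μ - m)) ∘ X := by
    have hpull := condExp_comp_mul_ae_eq (hf.div he) hwres hres
      (condExp_residual_ae_eq hm hT hTY hmT hTe hTYeμ)
    rwa [← mul_assoc (f / e), hweight] at hpull
  have hcond_fm : P[(f * m) ∘ X | m𝒳.comap X] = (f * m) ∘ X :=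
    condExp_of_stronglyMeasurable hX.comap_le
      ((hf.mul hm).comp (comap_measurable X)).stronglyMeasurable hfm
  calc P[(f ∘ X) * armScore X T Y e m | m𝒳.comap X]
      = P[((f / e) ∘ X) * (T * (Y - m ∘ X)) + (f * m) ∘ X | m𝒳.comap X] := by rw [mul_armScore]
    _ =ᵐ[P] P[((f / e) ∘ X) * (T * (Y - m ∘ X)) | m𝒳.comap X] + P[(f * m) ∘ X | m𝒳.comap X] :=
        condExp_add hwres hfm _
    _ =ᵐ[P] (f * (μ - m)) ∘ X + (f * m) ∘ X := hcond_wres.add (.of_eq hcond_fm)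
    _ = (f * μ) ∘ X := by
        rw [← Pi.add_comp, ← mul_add, sub_add_cancel]

end Score

section ArmIndicator

variable {𝒳 α 𝒴 : Type*} [DecidableEq α]

/-- The indicator `1[A = k]` that the action in the observation `(X, A, Y)` is `k`. -/
def armIndicator (k : α) (o : 𝒳 × α × 𝒴) : ℝ :=
  if o.2.1 = k then 1 else 0

theorem armIndicator_mul (k : α) (Z : 𝒳 × α × 𝒴 → ℝ) :
    armIndicator k * Z = fun o => if o.2.1 = k then Z o else 0 := by
  ext o
  simp [armIndicator]

theorem integrable_mul_armIndicator [MeasurableSpace 𝒳] [MeasurableSpace α]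
    [MeasurableSingletonClass α] [MeasurableSpace 𝒴] {P : Measure (𝒳 × α × 𝒴)}
    {Z : 𝒳 × α × 𝒴 → ℝ} (hZ : Integrable Z P) (k : α) : Integrable (Z * armIndicator k) P := by
  have hk : MeasurableSet {o : 𝒳 × α × 𝒴 | o.2.1 = k} :=
    measurable_snd.fst (measurableSet_singleton k)
  have hZk : Z * armIndicator k = {o | o.2.1 = k}.indicator Z := by
    ext o
    simp [armIndicator, Set.indicator_apply]
  exact hZk ▸ hZ.indicator hk

end ArmIndicator

section Policy

variable {𝒳 : Type*} {K dY : ℕ}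

theorem psiDR_eq_sum_armScore (e : Fin K → 𝒳 → ℝ) (m : Fin dY → Fin K → 𝒳 → ℝ)
    (π : Fin K → 𝒳 → ℝ) (j : Fin dY) :
    psiDR K dY e m π j = ∑ k, (π k ∘ Prod.fst) * armScore Prod.fst (armIndicator k)
      (fun o : 𝒳 × Fin K × (Fin dY → ℝ) => o.2.2 j) (e k) (m j k) := by
  ext o
  simp [psiDR, armScore, armIndicator, ite_div]

theorem dr_score_unbiased_general [m𝒳 : MeasurableSpace 𝒳]
    {P : Measure (𝒳 × Fin K × (Fin dY → ℝ))} [IsFiniteMeasure P]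
    (e : Fin K → 𝒳 → ℝ) (μreg m : Fin dY → Fin K → 𝒳 → ℝ) (π : Fin K → 𝒳 → ℝ) (j : Fin dY)
    (he : ∀ k, Measurable (e k)) (hμ : ∀ k, Measurable (μreg j k))
    (hm : ∀ k, Measurable (m j k)) (hπ : ∀ k, Measurable (π k))
    (C : ℝ) (hπe : ∀ k x, |π k x| ≤ C * e k x)
    (hY : Integrable (fun o => o.2.2 j) P) (hmX : ∀ k, Integrable (fun o => m j k o.1) P)
    (hcond : ∀ k, IsRegressionFunction P Prod.fst (fun o => if o.2.1 = k then o.2.2 j else 0)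
      (fun x => e k x * μreg j k x))
    (hprop : ∀ k, IsRegressionFunction P Prod.fst (fun o => if o.2.1 = k then 1 else 0) (e k)) :
    ∫ o, psiDR K dY e m π j o ∂P = ∫ o, ∑ k : Fin K, π k o.1 * μreg j k o.1 ∂P := by
  have hT (k : Fin K) : Integrable (armIndicator k) P :=
    one_mul (armIndicator k) ▸ integrable_mul_armIndicator (integrable_const (1 : ℝ)) k
  have hTY (k : Fin K) : Integrable (armIndicator k * fun o => o.2.2 j) P :=
    mul_comm (armIndicator k) _ ▸ integrable_mul_armIndicator hY k
  have hmT (k : Fin K) : Integrable ((m j k ∘ Prod.fst) * armIndicator k) P :=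
    integrable_mul_armIndicator (hmX k) k
  have hTe (k : Fin K) : P[armIndicator k | m𝒳.comap Prod.fst] =ᵐ[P] e k ∘ Prod.fst :=
    (hprop k).condExp_ae_eq measurable_fst (he k) (hT k)
  have hTYeμ (k : Fin K) : P[armIndicator k * fun o => o.2.2 j | m𝒳.comap Prod.fst] =ᵐ[P]
      (e k * μreg j k) ∘ Prod.fst :=
    IsRegressionFunction.condExp_ae_eq
      (armIndicator_mul k (fun o : 𝒳 × Fin K × (Fin dY → ℝ) => o.2.2 j) ▸ hcond k)
      measurable_fst ((he k).mul (hμ k)) (hTY k)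
  have hcondExp : P[psiDR K dY e m π j | m𝒳.comap Prod.fst] =ᵐ[P]
      fun o => ∑ k, π k o.1 * μreg j k o.1 := by
    rw [psiDR_eq_sum_armScore]
    filter_upwards [condExp_finsetSum (fun k _ => integrable_mul_armScore measurable_fst (he k)
        (hm k) (hπ k) (hπe k) (hT k) (hTY k) (hmT k) (hTe k)) _,
      ae_all_iff.2 fun k => condExp_mul_armScore_ae_eq measurable_fst (he k)
        (hm k) (hπ k) (hπe k) (hT k) (hTY k) (hmT k) (hTe k) (hTYeμ k)] with o hsum harm
    rw [hsum, Finset.sum_apply]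
    exact Finset.sum_congr rfl fun k _ => harm k
  rw [← integral_condExp measurable_fst.comap_le, integral_congr_ae hcondExp]

end Policy

/-- **Unbiasedness (double robustness in the regression) of the DR score**
(Statement 4).  Under strict positivity with the true propensity `e`, for any
measurable outcome-regression `m : [K] × 𝒳 → [0,1]^{d_Y}` (not necessarily equal to
the true conditional mean `μ`), `E_P[ψ_j^{DR}(O, π; m, e)] = V_j(π)` for every policy
`π` and outcome `j`.  Being the true propensity / conditional mean is encoded by the
integral identities `hcond` and `hprop` against bounded measurable functions of the
covariates. -/
theorem dr_score_unbiased
    {𝒳 : Type*} [MeasurableSpace 𝒳] (K dY : ℕ) (hK : 0 < K)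
    (Pobs : Measure (𝒳 × Fin K × (Fin dY → ℝ))) [IsProbabilityMeasure Pobs]
    (e : Fin K → 𝒳 → ℝ) (μreg : Fin dY → Fin K → 𝒳 → ℝ)
    (c : ℝ) (hc : c ∈ Set.Ioo (0 : ℝ) 1)
    (hpos : ∀ k x, c ≤ e k x)
    (hemeas : ∀ k, Measurable (e k))
    (hμmeas : ∀ j k, Measurable (μreg j k))
    (hμbdd : ∀ j k x, μreg j k x ∈ Set.Icc (0 : ℝ) 1)
    (hY : ∀ᵐ o ∂Pobs, ∀ j, o.2.2 j ∈ Set.Icc (0 : ℝ) 1)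
    -- `μreg` is the true conditional mean of `Y` given `(A,X)`
    (hcond : ∀ (j : Fin dY) (k : Fin K) (g : 𝒳 → ℝ), Measurable g → (∃ C, ∀ x, |g x| ≤ C) →
      ∫ o, g o.1 * (if o.2.1 = k then o.2.2 j else 0) ∂Pobs
        = ∫ o, g o.1 * (e k o.1 * μreg j k o.1) ∂Pobs)
    -- `e` is the true propensity score
    (hprop : ∀ (k : Fin K) (g : 𝒳 → ℝ), Measurable g → (∃ C, ∀ x, |g x| ≤ C) →
      ∫ o, g o.1 * (if o.2.1 = k then (1 : ℝ) else 0) ∂Pobs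
        = ∫ o, g o.1 * e k o.1 ∂Pobs)
    -- an arbitrary measurable outcome-regression with values in [0,1]
    (m : Fin dY → Fin K → 𝒳 → ℝ)
    (hmmeas : ∀ j k, Measurable (m j k))
    (hmbdd : ∀ j k x, m j k x ∈ Set.Icc (0 : ℝ) 1)
    -- the policy π
    (π : Fin K → 𝒳 → ℝ) (hπmeas : ∀ k, Measurable (π k))
    (hπnonneg : ∀ k x, 0 ≤ π k x) (hπsum : ∀ x, ∑ k : Fin K, π k x = 1)
    (j : Fin dY) :
    ∫ o, psiDR K dY e m π j o ∂Pobs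
      = ∫ o, ∑ k : Fin K, π k o.1 * μreg j k o.1 ∂Pobs := by
  exact dr_score_unbiased_general e μreg m π j hemeas (hμmeas j) (hmmeas j) hπmeas c⁻¹
    (fun k x => abs_le_inv_mul_of_sum_eq_one (hπnonneg · x) (hπsum x) hc.1 (hpos k x) k)
    (.of_mem_Icc 0 1 (by fun_prop) (hY.mono fun _ ho => ho j))
    (fun k => .of_mem_Icc 0 1 (by fun_prop) (ae_of_all _ fun o => hmbdd j k o.1)) (hcond j) hprop
end

section
/- Let 𝒜 be an ε-stable (ε-differentially private) randomized algorithm applied to n i.i.d. observations {O_i}_{i=1}^n, and let {O_i'}_{i=1}^n be an independent identically distributed copy. Define the δ-approximate max information I^δ(𝒜({O_i}); {O_i}) = max over measurable events ℰ of log[(P((𝒜({O_i}), {O_i}) ∈ ℰ) − δ) / P((𝒜({O_i}), {O_i'}) ∈ ℰ)]. Then for every δ ∈ (0,1), I^δ(𝒜({O_i}); {O_i}) ≤ (n/2)ε² + ε√(n log(2/δ)/2). -/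
set_option autoImplicit false

open MeasureTheory ProbabilityTheory

/-- Two `n`-tuples of observations are adjacent if they differ in at most one entry. -/
def AdjacentTuples {𝒪 : Type*} {n : ℕ} (d d' : Fin n → 𝒪) : Prop :=
  ∃ i₀ : Fin n, ∀ i : Fin n, i ≠ i₀ → d i = d' i

/-! Let `w` be the likelihood ratio of the joint law of data and output against the product of its
marginals. For almost every output `θ`, the function `w (·, θ)` has mean `1`, and by stability it
changes by a factor at most `exp (ε i)` when the `i`-th observation is resampled. Averaging out one
coordinate at a time preserves the remaining ratio bounds, so the one-variable inequality
`∫ f ^ m ≤ exp (m (m - 1) c² / 8) (∫ f) ^ m` for functions of oscillation ratio at most `exp c`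
yields `∫ w ^ m ≤ exp (m (m - 1) S / 8)` with `S = ∑ i, ε i ^ 2`. By Markov's inequality, the joint
law gives mass at most `exp (- 2 r² / S)` to `{w > exp (S / 8 + r)}`, which is `δ` for
`r = √(S log δ⁻¹ / 2)`; off this event the joint law is at most `exp (S / 8 + r)` times the product
law. -/

open Function Real
open scoped ENNReal

section ReversePowerMean

variable {Ω : Type*} [MeasurableSpace Ω] {μ : Measure Ω}

lemma mgf_tilted_self (X : Ω → ℝ) (t : ℝ) :
    mgf X (μ.tilted X) t = mgf X μ (t + 1) / mgf X μ 1 := by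
  simp [mgf, integral_exp_tilted, add_mul, add_comm]

variable [IsProbabilityMeasure μ]

lemma mgf_le_exp_of_mem_Icc {X : Ω → ℝ} {a b : ℝ} (hX : AEMeasurable X μ)
    (hab : ∀ᵐ ω ∂μ, X ω ∈ Set.Icc a b) (t : ℝ) :
    mgf X μ t ≤ exp (t * ∫ ω, X ω ∂μ + t ^ 2 * (b - a) ^ 2 / 8) := by
  have hsub := (hasSubgaussianMGF_of_mem_Icc hX hab).mgf_le t
  simp only [sub_eq_add_neg (X _), mgf_add_const, NNReal.coe_pow, NNReal.coe_div, coe_nnnorm,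
    NNReal.coe_ofNat, norm_eq_abs, div_pow, sq_abs] at hsub
  calc mgf X μ t
      = exp (t * ∫ ω, X ω ∂μ) * (mgf X μ t * exp (t * -∫ ω, X ω ∂μ)) := by
        rw [mul_left_comm, ← exp_add]; simp
    _ ≤ exp (t * ∫ ω, X ω ∂μ) * exp ((b - a) ^ 2 / 2 ^ 2 * t ^ 2 / 2) := by gcongr
    _ = exp (t * ∫ ω, X ω ∂μ + t ^ 2 * (b - a) ^ 2 / 8) := by
        rw [← exp_add]; ring_nf

lemma mgf_le_mul_mgf_one_rpow {X : Ω → ℝ} {a b m : ℝ} (hX : AEMeasurable X μ)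
    (hab : ∀ᵐ ω ∂μ, X ω ∈ Set.Icc a b) (hm : 1 ≤ m) :
    mgf X μ m ≤ exp (m * (m - 1) / 8 * (b - a) ^ 2) * mgf X μ 1 ^ m := by
  have hint : Integrable (fun ω => exp (X ω)) μ := by
    simpa using integrable_exp_mul_of_mem_Icc (t := 1) hX hab
  have : IsProbabilityMeasure (μ.tilted X) := isProbabilityMeasure_tilted hint
  have hpos : 0 < mgf X μ 1 := mgf_pos (by simpa using hint)
  -- Hoeffding's lemma for the tilted measure: `t = m - 1` gives `mgf X μ m`, while `t = -1` bounds
  -- the tilted mean `A` by the logarithm of `mgf X μ 1`.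
  set A := ∫ ω, X ω ∂(μ.tilted X)
  have htilted (t : ℝ) : mgf X μ (t + 1) / mgf X μ 1 ≤ exp (t * A + t ^ 2 * (b - a) ^ 2 / 8) :=
    mgf_tilted_self (μ := μ) X t ▸ mgf_le_exp_of_mem_Icc
      (hX.mono_ac (tilted_absolutelyContinuous μ X)) (tilted_absolutelyContinuous μ X hab) t
  have hmean : exp A ≤ exp ((b - a) ^ 2 / 8) * mgf X μ 1 := by
    have h := htilted (-1)
    rw [neg_add_cancel, mgf_zero, div_le_iff₀ hpos] at h
    calc exp A ≤ exp A * (exp (-1 * A + (-1) ^ 2 * (b - a) ^ 2 / 8) * mgf X μ 1) :=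
          le_mul_of_one_le_right (exp_pos _).le h
      _ = _ := by rw [← mul_assoc, ← exp_add]; ring_nf
  calc mgf X μ m
      ≤ exp ((m - 1) * A + (m - 1) ^ 2 * (b - a) ^ 2 / 8) * mgf X μ 1 := by
        simpa [div_le_iff₀ hpos] using htilted (m - 1)
    _ = exp A ^ (m - 1) * exp ((m - 1) ^ 2 * (b - a) ^ 2 / 8) * mgf X μ 1 := by
        rw [← exp_mul, ← exp_add, mul_comm A]
    _ ≤ (exp ((b - a) ^ 2 / 8) * mgf X μ 1) ^ (m - 1) * exp ((m - 1) ^ 2 * (b - a) ^ 2 / 8)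
          * mgf X μ 1 := by
        gcongr
    _ = exp ((b - a) ^ 2 / 8 * (m - 1) + (m - 1) ^ 2 * (b - a) ^ 2 / 8)
          * (mgf X μ 1 ^ (m - 1) * mgf X μ 1) := by
        rw [mul_rpow (exp_pos _).le hpos.le, ← exp_mul, exp_add]; ring
    _ = exp (m * (m - 1) / 8 * (b - a) ^ 2) * mgf X μ 1 ^ m := by
        rw [← rpow_add_one hpos.ne']; ring_nf

lemma lintegral_ofReal_exp_rpow_le {X : Ω → ℝ} {a b m : ℝ} (hX : AEMeasurable X μ)
    (hab : ∀ᵐ ω ∂μ, X ω ∈ Set.Icc a b) (hm : 1 ≤ m) :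
    ∫⁻ ω, ENNReal.ofReal (exp (X ω)) ^ m ∂μ ≤
      ENNReal.ofReal (exp (m * (m - 1) / 8 * (b - a) ^ 2))
        * (∫⁻ ω, ENNReal.ofReal (exp (X ω)) ∂μ) ^ m := by
  have hmgf (t : ℝ) : ∫⁻ ω, ENNReal.ofReal (exp (t * X ω)) ∂μ = ENNReal.ofReal (mgf X μ t) :=
    (ofReal_integral_eq_lintegral_ofReal (integrable_exp_mul_of_mem_Icc hX hab)
      (.of_forall fun _ => (exp_pos _).le)).symm
  have hone := hmgf 1
  simp only [one_mul] at hone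
  simp_rw [ENNReal.ofReal_rpow_of_pos (exp_pos _), ← exp_mul, mul_comm (X _) m]
  rw [hmgf m, hone, ENNReal.ofReal_rpow_of_nonneg mgf_nonneg (by positivity),
    ← ENNReal.ofReal_mul (exp_pos _).le]
  exact ENNReal.ofReal_le_ofReal (mgf_le_mul_mgf_one_rpow hX hab hm)

lemma log_toReal_mem_Icc {x M : ℝ≥0∞} {c : ℝ} (hM : M ≠ 0) (hM' : M ≠ ∞) (hxM : x ≤ M)
    (hMx : M ≤ ENNReal.ofReal (exp c) * x) :
    log x.toReal ∈ Set.Icc (log M.toReal - c) (log M.toReal) := by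
  have hx0 : x ≠ 0 := by rintro rfl; simp_all
  have hx : x ≠ ∞ := (hxM.trans_lt hM'.lt_top).ne
  have hMx' : M.toReal ≤ exp c * x.toReal := by
    simpa [(exp_pos c).le] using
      ENNReal.toReal_mono (ENNReal.mul_ne_top ENNReal.ofReal_ne_top hx) hMx
  have hpos := ENNReal.toReal_pos hx0 hx
  have hlog := log_le_log (ENNReal.toReal_pos hM hM') hMx'
  rw [log_mul (exp_pos c).ne' hpos.ne', log_exp] at hlog
  exact ⟨by linarith, log_le_log hpos (ENNReal.toReal_mono hM' hxM)⟩

lemma lintegral_rpow_le_of_ae_le_mul {f : Ω → ℝ≥0∞} {c m : ℝ} (hf : Measurable f) (hm : 1 ≤ m)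
    (h : ∀ᵐ y ∂μ, ∀ᵐ x ∂μ, f x ≤ ENNReal.ofReal (exp c) * f y) :
    ∫⁻ x, f x ^ m ∂μ ≤ ENNReal.ofReal (exp (m * (m - 1) / 8 * c ^ 2)) * (∫⁻ x, f x ∂μ) ^ m := by
  have hm0 : 0 < m := by linarith
  set M := essSup f μ
  have hle : ∀ᵐ x ∂μ, f x ≤ M := ENNReal.ae_le_essSup f
  have hge : ∀ᵐ x ∂μ, M ≤ ENNReal.ofReal (exp c) * f x := h.mono fun _ => essSup_le_of_ae_le _
  obtain hM | hM := eq_or_ne M 0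
  · have hzero : ∀ᵐ x ∂μ, f x ^ m = 0 := by
      filter_upwards [hle] with x hx
      simp [nonpos_iff_eq_zero.1 (hM ▸ hx), hm0]
    simp [lintegral_congr_ae hzero]
  obtain hM' | hM' := eq_or_ne M ∞
  · have htop : ∀ᵐ x ∂μ, f x = ∞ := by
      filter_upwards [hge] with x hx
      by_contra hfx
      exact ENNReal.mul_ne_top ENNReal.ofReal_ne_top hfx (top_le_iff.1 (hM' ▸ hx))
    simp [lintegral_congr_ae htop, hm0, exp_pos]
  have hexp : ∀ᵐ x ∂μ, ENNReal.ofReal (exp (log (f x).toReal)) = f x := by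
    filter_upwards [hle, hge] with x hxM hMx
    have hx0 : f x ≠ 0 := by intro h0; simp_all
    have hx : f x ≠ ∞ := (hxM.trans_lt hM'.lt_top).ne
    rw [exp_log (ENNReal.toReal_pos hx0 hx), ENNReal.ofReal_toReal hx]
  have hIcc := hle.and hge |>.mono fun x hx => log_toReal_mem_Icc hM hM' hx.1 hx.2
  have hlog := lintegral_ofReal_exp_rpow_le hf.ennreal_toReal.log.aemeasurable hIcc hm
  have hexp_rpow : ∀ᵐ x ∂μ, ENNReal.ofReal (exp (log (f x).toReal)) ^ m = f x ^ m :=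
    hexp.mono fun _ hx => by rw [hx]
  rwa [lintegral_congr_ae hexp, lintegral_congr_ae hexp_rpow, sub_sub_cancel] at hlog

end ReversePowerMean

section Tensorization

variable {ι : Type*} [Fintype ι] [DecidableEq ι] {X : ι → Type*} [∀ i, MeasurableSpace (X i)]
  (μ : ∀ i, Measure (X i)) [∀ i, IsProbabilityMeasure (μ i)]

lemma lintegral_pi_eq_lintegral_lintegral_update (i : ι) {f : (∀ i, X i) → ℝ≥0∞}
    (hf : Measurable f) :
    ∫⁻ x, f x ∂Measure.pi μ = ∫⁻ x, ∫⁻ y, f (update x i y) ∂μ i ∂Measure.pi μ := by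
  refine lintegral_eq_of_lmarginal_eq {i} hf ?_ ?_
  · exact (hf.comp measurable_update').lintegral_prod_right'
  · funext x
    simp [lmarginal_singleton]

lemma measurePreserving_update (i : ι) :
    MeasurePreserving (fun p : (∀ i, X i) × X i => update p.1 i p.2)
      ((Measure.pi μ).prod (μ i)) (Measure.pi μ) where
  measurable := measurable_update'
  map_eq := by
    ext s hs
    have hind : Measurable (s.indicator (1 : (∀ i, X i) → ℝ≥0∞)) := measurable_one.indicator hs
    rw [← lintegral_indicator_one hs, ← lintegral_indicator_one hs,
      lintegral_map hind measurable_update', lintegral_pi_eq_lintegral_lintegral_update μ i hind]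
    exact lintegral_prod _ (hind.comp measurable_update').aemeasurable

/-- `f` decreases by a factor at most `K` when its `i`-th coordinate is resampled. The condition is
only almost everywhere, so that it applies to Radon-Nikodym derivatives. -/
def HasRatioBound (i : ι) (K : ℝ≥0∞) (f : (∀ i, X i) → ℝ≥0∞) : Prop :=
  ∀ᵐ p ∂(Measure.pi μ).prod (μ i), f p.1 ≤ K * f (update p.1 i p.2)

variable {μ}

lemma ae_ae_update_of_ae {i j : ι} {φ : (∀ i, X i) × X j → Prop}
    (h : ∀ᵐ p ∂(Measure.pi μ).prod (μ j), φ p) :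
    ∀ᵐ p ∂(Measure.pi μ).prod (μ j), ∀ᵐ y ∂μ i, φ (update p.1 i y, p.2) := by
  have hswap : MeasurePreserving (fun q : ((∀ i, X i) × X j) × X i => ((q.1.1, q.2), q.1.2))
      (((Measure.pi μ).prod (μ j)).prod (μ i)) (((Measure.pi μ).prod (μ i)).prod (μ j)) :=
    (measurePreserving_prodAssoc _ _ _).symm.comp
      (((MeasurePreserving.id _).prod Measure.measurePreserving_swap).comp
        (measurePreserving_prodAssoc _ _ _))
  exact Measure.ae_ae_of_ae_prod
    ((((measurePreserving_update μ i).prod (.id _)).comp hswap).quasiMeasurePreserving.ae h)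

lemma HasRatioBound.lintegral_update {i j : ι} {K : ℝ≥0∞} {f : (∀ i, X i) → ℝ≥0∞}
    (h : HasRatioBound μ i K f) (hf : Measurable f) (hij : i ≠ j) :
    HasRatioBound μ i K fun x => ∫⁻ y, f (update x j y) ∂μ j := by
  filter_upwards [ae_ae_update_of_ae (i := j) h] with p hp
  have hmeas : Measurable fun y => f (update (update p.1 i p.2) j y) :=
    hf.comp (measurable_update _)
  rw [← lintegral_const_mul _ hmeas]
  simp_rw [update_comm hij]
  exact lintegral_mono_ae (hp.mono fun y hy => by simpa [update_comm hij] using hy)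

lemma HasRatioBound.lmarginal {i : ι} {K : ℝ≥0∞} {f : (∀ i, X i) → ℝ≥0∞} {s : Finset ι}
    (h : HasRatioBound μ i K f) (hf : Measurable f) (hi : i ∉ s) :
    HasRatioBound μ i K (∫⋯∫⁻_s, f ∂μ) := by
  induction s using Finset.induction with
  | empty => simpa using h
  | insert j s hj ih =>
    rw [Finset.mem_insert, not_or] at hi
    rw [funext (lmarginal_insert f hf hj)]
    exact (ih hi.2).lintegral_update (hf.lmarginal μ) hi.1

lemma HasRatioBound.lintegral_rpow_le {i : ι} {c m : ℝ} {f : (∀ i, X i) → ℝ≥0∞}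
    (h : HasRatioBound μ i (ENNReal.ofReal (exp c)) f) (hf : Measurable f) (hm : 1 ≤ m) :
    ∫⁻ x, f x ^ m ∂Measure.pi μ ≤ ENNReal.ofReal (exp (m * (m - 1) / 8 * c ^ 2))
      * ∫⁻ x, (∫⁻ y, f (update x i y) ∂μ i) ^ m ∂Measure.pi μ := by
  have hmeas : Measurable fun x => ∫⁻ y, f (update x i y) ∂μ i :=
    (hf.comp measurable_update').lintegral_prod_right'
  rw [lintegral_pi_eq_lintegral_lintegral_update μ i (hf.pow_const m),
    ← lintegral_const_mul _ (hmeas.pow_const m)]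
  refine lintegral_mono_ae ?_
  filter_upwards [Measure.ae_ae_of_ae_prod (ae_ae_update_of_ae (i := i) h)] with x hx
  exact lintegral_rpow_le_of_ae_le_mul (hf.comp (measurable_update x)) hm (by simpa using hx)

theorem lintegral_pi_rpow_le {c : ι → ℝ} {m : ℝ} {f : (∀ i, X i) → ℝ≥0∞} (hf : Measurable f)
    (hm : 1 ≤ m) (h : ∀ i, HasRatioBound μ i (ENNReal.ofReal (exp (c i))) f) :
    ∫⁻ x, f x ^ m ∂Measure.pi μ ≤
      ENNReal.ofReal (exp (m * (m - 1) / 8 * ∑ i, c i ^ 2)) * (∫⁻ x, f x ∂Measure.pi μ) ^ m := by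
  have hpartial (s : Finset ι) : ∫⁻ x, f x ^ m ∂Measure.pi μ ≤
      ENNReal.ofReal (exp (m * (m - 1) / 8 * ∑ i ∈ s, c i ^ 2))
        * ∫⁻ x, (∫⋯∫⁻_s, f ∂μ) x ^ m ∂Measure.pi μ := by
    induction s using Finset.induction with
    | empty => simp
    | insert j s hj ih =>
      rw [funext (lmarginal_insert f hf hj), Finset.sum_insert hj, add_comm, mul_add, exp_add,
        ENNReal.ofReal_mul (exp_pos _).le, mul_assoc]
      refine ih.trans ?_
      gcongr
      exact ((h j).lmarginal hf hj).lintegral_rpow_le (hf.lmarginal μ) hm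
  simpa using hpartial Finset.univ

end Tensorization

section ChangeOfMeasure

variable {Ω : Type*} [MeasurableSpace Ω] {J Q : Measure Ω} [SigmaFinite J] [SigmaFinite Q]

lemma measure_le_mul_add_measure_lt_rnDeriv (hJQ : J ≪ Q) (t : ℝ≥0∞) (E : Set Ω) :
    J E ≤ t * Q E + J {x | t < J.rnDeriv Q x} := by
  have hmeas : MeasurableSet {x | t < J.rnDeriv Q x} :=
    measurableSet_lt measurable_const (Measure.measurable_rnDeriv J Q)
  calc J E = J (E \ {x | t < J.rnDeriv Q x}) + J (E ∩ {x | t < J.rnDeriv Q x}) :=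
        (measure_sdiff_add_inter E hmeas).symm
    _ ≤ t * Q E + J {x | t < J.rnDeriv Q x} := by
        gcongr
        · rw [← Measure.setLIntegral_rnDeriv hJQ]
          calc ∫⁻ x in E \ {x | t < J.rnDeriv Q x}, J.rnDeriv Q x ∂Q
              ≤ ∫⁻ _ in E \ {x | t < J.rnDeriv Q x}, t ∂Q :=
                setLIntegral_mono measurable_const fun x hx => not_lt.1 hx.2
            _ ≤ t * Q E := by
                rw [setLIntegral_const]; gcongr; exact Set.sdiff_subset
        · exact Set.inter_subset_right

lemma measure_lt_rnDeriv_le (hJQ : J ≪ Q) {t : ℝ≥0∞} (ht : t ≠ 0) (ht' : t ≠ ∞) {m : ℝ}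
    (hm : 1 ≤ m) :
    J {x | t < J.rnDeriv Q x} ≤ t ^ (1 - m) * ∫⁻ x, J.rnDeriv Q x ^ m ∂Q := by
  have hmeas := Measure.measurable_rnDeriv J Q
  rw [← Measure.setLIntegral_rnDeriv hJQ, ← lintegral_const_mul _ (hmeas.pow_const m)]
  refine (setLIntegral_mono' (measurableSet_lt measurable_const hmeas) fun x hx => ?_).trans
    (setLIntegral_le_lintegral _ _)
  have htx : 1 ≤ J.rnDeriv Q x / t :=
    (ENNReal.le_div_iff_mul_le (.inl ht) (.inl ht')).2 (by simpa using hx.le)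
  calc J.rnDeriv Q x = t * (J.rnDeriv Q x / t) := (ENNReal.mul_div_cancel ht ht').symm
    _ ≤ t * (J.rnDeriv Q x / t) ^ m := by
        gcongr
        simpa using ENNReal.rpow_le_rpow_of_exponent_le htx hm
    _ = t ^ (1 - m) * J.rnDeriv Q x ^ m := by
        rw [ENNReal.div_rpow_of_nonneg _ _ (by linarith), ENNReal.rpow_sub _ _ ht ht',
          ENNReal.rpow_one, ENNReal.div_eq_inv_mul, ENNReal.div_eq_inv_mul]
        ring

lemma measure_exp_lt_rnDeriv_le (hJQ : J ≪ Q) {S r : ℝ} (hS : 0 < S) (hr : 0 ≤ r)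
    (h : ∀ m : ℝ, 1 ≤ m →
      ∫⁻ x, J.rnDeriv Q x ^ m ∂Q ≤ ENNReal.ofReal (exp (m * (m - 1) / 8 * S))) :
    J {x | ENNReal.ofReal (exp (S / 8 + r)) < J.rnDeriv Q x} ≤
      ENNReal.ofReal (exp (-(2 * r ^ 2 / S))) := by
  -- The exponent `(1 - m) * (S / 8 + r) + m * (m - 1) / 8 * S` of the Markov bound is minimal at
  -- `m = 1 + 4 * r / S`.
  have hm : 1 ≤ 1 + 4 * r / S := le_add_of_nonneg_right (by positivity)
  refine (measure_lt_rnDeriv_le hJQ (ENNReal.ofReal_pos.2 (exp_pos _)).ne'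
    ENNReal.ofReal_ne_top hm).trans ?_
  calc ENNReal.ofReal (exp (S / 8 + r)) ^ (1 - (1 + 4 * r / S))
        * ∫⁻ x, J.rnDeriv Q x ^ (1 + 4 * r / S) ∂Q
      ≤ ENNReal.ofReal (exp ((S / 8 + r) * (1 - (1 + 4 * r / S))))
        * ENNReal.ofReal (exp ((1 + 4 * r / S) * (1 + 4 * r / S - 1) / 8 * S)) := by
        rw [ENNReal.ofReal_rpow_of_pos (exp_pos _), ← exp_mul]
        gcongr
        exact h _ hm
    _ = ENNReal.ofReal (exp (-(2 * r ^ 2 / S))) := by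
        rw [← ENNReal.ofReal_mul (exp_pos _).le, ← exp_add]
        congr 2
        field_simp
        ring

end ChangeOfMeasure

section InfoDensity

variable {X X' Θ : Type*} [MeasurableSpace X] [MeasurableSpace X'] [MeasurableSpace Θ]

/-- The likelihood ratio of the joint law of input and output against the product of their laws,
that is, the exponential of the (pointwise) information density. -/
noncomputable def infoDensity (P : Measure X) (κ : Kernel X Θ) : X × Θ → ℝ≥0∞ :=
  (P ⊗ₘ κ).rnDeriv (P.prod (κ ∘ₘ P))

variable {P : Measure X} {κ : Kernel X Θ}

lemma measurable_infoDensity : Measurable (infoDensity P κ) :=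
  Measure.measurable_rnDeriv _ _

variable [IsProbabilityMeasure P] [IsMarkovKernel κ]

lemma compProd_absolutelyContinuous_prod_comp (h : ∀ x y, κ x ≪ κ y) :
    P ⊗ₘ κ ≪ P.prod (κ ∘ₘ P) := by
  rw [← Measure.compProd_const]
  refine Measure.AbsolutelyContinuous.compProd_right (.of_forall fun x => ?_)
  refine Measure.AbsolutelyContinuous.mk fun s hs h0 => ?_
  rw [Kernel.const_apply, Measure.bind_apply hs κ.aemeasurable,
    lintegral_eq_zero_iff (κ.measurable_coe hs)] at h0
  obtain ⟨y, hy⟩ := h0.exists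
  exact h x y hy

lemma setLIntegral_prod_infoDensity (hac : P ⊗ₘ κ ≪ P.prod (κ ∘ₘ P)) {s : Set X} {t : Set Θ}
    (hs : MeasurableSet s) (ht : MeasurableSet t) :
    ∫⁻ x in s, ∫⁻ θ in t, infoDensity P κ (x, θ) ∂(κ ∘ₘ P) ∂P = ∫⁻ x in s, κ x t ∂P := by
  rw [← setLIntegral_prod _ measurable_infoDensity.aemeasurable, infoDensity,
    Measure.setLIntegral_rnDeriv hac, Measure.compProd_apply_prod hs ht]

lemma ae_setLIntegral_infoDensity (hac : P ⊗ₘ κ ≪ P.prod (κ ∘ₘ P)) {t : Set Θ}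
    (ht : MeasurableSet t) :
    ∀ᵐ x ∂P, ∫⁻ θ in t, infoDensity P κ (x, θ) ∂(κ ∘ₘ P) = κ x t :=
  ae_eq_of_forall_setLIntegral_eq_of_sigmaFinite
    measurable_infoDensity.lintegral_prod_right' (κ.measurable_coe ht)
    fun _ hs _ => setLIntegral_prod_infoDensity hac hs ht

lemma ae_lintegral_infoDensity_eq_one (hac : P ⊗ₘ κ ≪ P.prod (κ ∘ₘ P)) :
    ∀ᵐ θ ∂(κ ∘ₘ P), ∫⁻ x, infoDensity P κ (x, θ) ∂P = 1 := by
  refine ae_eq_of_forall_setLIntegral_eq_of_sigmaFinite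
    measurable_infoDensity.lintegral_prod_left' measurable_const fun t ht _ => ?_
  have hswap := lintegral_lintegral_swap (μ := P) (ν := (κ ∘ₘ P).restrict t)
    (f := fun x θ => infoDensity P κ (x, θ)) measurable_infoDensity.aemeasurable
  have hrect := setLIntegral_prod_infoDensity hac .univ ht
  rw [setLIntegral_univ, setLIntegral_univ] at hrect
  rw [← hswap, hrect, setLIntegral_one, Measure.bind_apply ht κ.aemeasurable]

lemma compProd_comap_eq_withDensity (hac : P ⊗ₘ κ ≪ P.prod (κ ∘ₘ P)) {P' : Measure X'}
    [IsProbabilityMeasure P'] {T : X' → X} (hT : Measure.QuasiMeasurePreserving T P' P) :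
    P' ⊗ₘ κ.comap T hT.measurable =
      (P'.prod (κ ∘ₘ P)).withDensity fun p => infoDensity P κ (T p.1, p.2) := by
  have hmeas : Measurable fun p : X' × Θ => infoDensity P κ (T p.1, p.2) :=
    measurable_infoDensity.comp (hT.measurable.prodMap measurable_id)
  refine Measure.ext_prod fun {s t} hs ht => ?_
  rw [Measure.compProd_apply_prod hs ht, withDensity_apply _ (hs.prod ht),
    setLIntegral_prod _ hmeas.aemeasurable]
  exact lintegral_congr_ae (ae_restrict_of_ae
    ((hT.ae (ae_setLIntegral_infoDensity hac ht)).mono fun _ hx => hx.symm))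

lemma ae_infoDensity_le_mul (hac : P ⊗ₘ κ ≪ P.prod (κ ∘ₘ P)) {P' : Measure X'}
    [IsProbabilityMeasure P'] {T₁ T₂ : X' → X} (hT₁ : Measure.QuasiMeasurePreserving T₁ P' P)
    (hT₂ : Measure.QuasiMeasurePreserving T₂ P' P) {K : ℝ≥0∞}
    (h : ∀ x, κ (T₁ x) ≤ K • κ (T₂ x)) :
    ∀ᵐ p ∂P'.prod (κ ∘ₘ P), infoDensity P κ (T₁ p.1, p.2) ≤ K * infoDensity P κ (T₂ p.1, p.2) := by
  have hmeas {T : X' → X} (hT : Measure.QuasiMeasurePreserving T P' P) :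
      Measurable fun p : X' × Θ => infoDensity P κ (T p.1, p.2) :=
    measurable_infoDensity.comp (hT.measurable.prodMap measurable_id)
  refine ae_le_of_forall_setLIntegral_le_of_sigmaFinite (hmeas hT₁) fun s hs _ => ?_
  rw [lintegral_const_mul _ (hmeas hT₂), ← withDensity_apply _ hs, ← withDensity_apply _ hs,
    ← compProd_comap_eq_withDensity hac hT₁, ← compProd_comap_eq_withDensity hac hT₂,
    Measure.compProd_apply hs, Measure.compProd_apply hs,
    ← lintegral_const_mul _ (Kernel.measurable_kernel_prodMk_left hs)]
  exact lintegral_mono fun x => h x _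

end InfoDensity

section Stability

variable {ι : Type*} [DecidableEq ι] {X : ι → Type*} {Θ : Type*}
  [∀ i, MeasurableSpace (X i)] [MeasurableSpace Θ]

/-- Stability (differential privacy) of a randomized algorithm, with a separate privacy level `ε i`
for each observation. -/
def IsStable (κ : Kernel (∀ i, X i) Θ) (ε : ι → ℝ) : Prop :=
  ∀ i x y, κ x ≤ ENNReal.ofReal (exp (ε i)) • κ (update x i y)

namespace IsStable

variable {κ : Kernel (∀ i, X i) Θ} {ε : ι → ℝ}

lemma absolutelyContinuous [Finite ι] (h : IsStable κ ε) (x y : ∀ i, X i) : κ x ≪ κ y := by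
  have := Fintype.ofFinite ι
  have hpiecewise (s : Finset ι) : κ x ≪ κ (s.piecewise y x) := by
    induction s using Finset.induction with
    | empty => simpa using Measure.AbsolutelyContinuous.rfl
    | insert i s _ ih =>
      rw [Finset.piecewise_insert]
      exact ih.trans (Measure.absolutelyContinuous_of_le_smul (h i _ _))
  simpa using hpiecewise Finset.univ

variable [Fintype ι] [IsMarkovKernel κ] {μ : ∀ i, Measure (X i)} [∀ i, IsProbabilityMeasure (μ i)]

lemma compProd_absolutelyContinuous (h : IsStable κ ε) :
    Measure.pi μ ⊗ₘ κ ≪ (Measure.pi μ).prod (κ ∘ₘ Measure.pi μ) :=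
  compProd_absolutelyContinuous_prod_comp h.absolutelyContinuous

lemma ae_hasRatioBound_infoDensity (h : IsStable κ ε) :
    ∀ᵐ θ ∂(κ ∘ₘ Measure.pi μ), ∀ i, HasRatioBound μ i (ENNReal.ofReal (exp (ε i)))
      fun x => infoDensity (Measure.pi μ) κ (x, θ) := by
  refine ae_all_iff.2 fun i => ?_
  have hresample : ∀ᵐ p ∂((Measure.pi μ).prod (μ i)).prod (κ ∘ₘ Measure.pi μ),
      infoDensity (Measure.pi μ) κ (p.1.1, p.2) ≤ ENNReal.ofReal (exp (ε i))
        * infoDensity (Measure.pi μ) κ (update p.1.1 i p.1.2, p.2) :=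
    ae_infoDensity_le_mul h.compProd_absolutelyContinuous Measure.quasiMeasurePreserving_fst
      (measurePreserving_update μ i).quasiMeasurePreserving fun p => h i p.1 p.2
  exact Measure.ae_ae_of_ae_prod
    (Measure.measurePreserving_swap.quasiMeasurePreserving.ae hresample)

lemma lintegral_infoDensity_rpow_le (h : IsStable κ ε) {m : ℝ} (hm : 1 ≤ m) :
    ∫⁻ p, infoDensity (Measure.pi μ) κ p ^ m ∂(Measure.pi μ).prod (κ ∘ₘ Measure.pi μ) ≤
      ENNReal.ofReal (exp (m * (m - 1) / 8 * ∑ i, ε i ^ 2)) := by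
  rw [lintegral_prod_symm _ (measurable_infoDensity.pow_const m).aemeasurable]
  calc ∫⁻ θ, ∫⁻ x, infoDensity (Measure.pi μ) κ (x, θ) ^ m ∂Measure.pi μ ∂(κ ∘ₘ Measure.pi μ)
      ≤ ∫⁻ _, ENNReal.ofReal (exp (m * (m - 1) / 8 * ∑ i, ε i ^ 2)) ∂(κ ∘ₘ Measure.pi μ) := by
        refine lintegral_mono_ae ?_
        filter_upwards [h.ae_hasRatioBound_infoDensity,
          ae_lintegral_infoDensity_eq_one h.compProd_absolutelyContinuous] with θ hratio hone
        simpa [hone] using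
          lintegral_pi_rpow_le (measurable_infoDensity.comp measurable_prodMk_right) hm hratio
    _ = ENNReal.ofReal (exp (m * (m - 1) / 8 * ∑ i, ε i ^ 2)) := by simp

end IsStable

theorem max_information_bound_of_stable_general [Fintype ι] (μ : ∀ i, Measure (X i))
    [∀ i, IsProbabilityMeasure (μ i)] {κ : Kernel (∀ i, X i) Θ} [IsMarkovKernel κ] {ε : ι → ℝ}
    (h : IsStable κ ε) (hS : 0 < ∑ i, ε i ^ 2) {δ : ℝ} (hδ : δ ∈ Set.Ioc 0 1)
    (E : Set ((∀ i, X i) × Θ)) :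
    ((Measure.pi μ ⊗ₘ κ) E).toReal - δ ≤
      exp ((∑ i, ε i ^ 2) / 8 + √((∑ i, ε i ^ 2) * log δ⁻¹ / 2))
        * ((Measure.pi μ).prod (κ ∘ₘ Measure.pi μ) E).toReal := by
  set S := ∑ i, ε i ^ 2
  set r := √(S * log δ⁻¹ / 2)
  have hlog : 0 ≤ log δ⁻¹ := log_nonneg ((one_le_inv₀ hδ.1).2 hδ.2)
  have hr : exp (-(2 * r ^ 2 / S)) = δ := by
    rw [sq_sqrt (by positivity), mul_div_cancel₀ _ two_ne_zero, mul_div_cancel_left₀ _ hS.ne',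
      log_inv, neg_neg, exp_log hδ.1]
  have hac := h.compProd_absolutelyContinuous (μ := μ)
  have htail := measure_exp_lt_rnDeriv_le hac hS (r := r) (sqrt_nonneg _)
    fun _ => h.lintegral_infoDensity_rpow_le
  rw [hr] at htail
  have hE := (measure_le_mul_add_measure_lt_rnDeriv hac _ E).trans (add_le_add_right htail _)
  rw [sub_le_iff_le_add]
  simpa [ENNReal.toReal_add, ENNReal.mul_ne_top, (exp_pos _).le, hδ.1.le] using
    ENNReal.toReal_mono (by finiteness) hE

end Stability

lemma AdjacentTuples.update_right {𝒪 : Type*} {n : ℕ} (d : Fin n → 𝒪) (i : Fin n) (y : 𝒪) :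
    AdjacentTuples d (update d i y) :=
  ⟨i, fun _ hj => (update_of_ne hj y d).symm⟩

lemma isStable_of_adjacentTuples {𝒪 Θ : Type*} [MeasurableSpace 𝒪] [MeasurableSpace Θ] {n : ℕ}
    {ε : ℝ} {κ : Kernel (Fin n → 𝒪) Θ}
    (h : ∀ d d' : Fin n → 𝒪, AdjacentTuples d d' → ∀ E : Set Θ, MeasurableSet E →
      κ d E ≤ ENNReal.ofReal (exp ε) * κ d' E) :
    IsStable κ fun _ => ε :=
  fun i d y => Measure.le_iff.2 (h d _ (.update_right d i y))

lemma sq_div_eight_add_sqrt_log_inv_le {N ε δ : ℝ} (hN : 0 ≤ N) (hε : 0 ≤ ε) (hδ : 0 < δ) :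
    N * ε ^ 2 / 8 + √(N * ε ^ 2 * log δ⁻¹ / 2) ≤ N / 2 * ε ^ 2 + ε * √(N * log (2 / δ) / 2) := by
  have hlog : log δ⁻¹ ≤ log (2 / δ) := by
    rw [div_eq_mul_inv]
    exact log_le_log (by positivity) (le_mul_of_one_le_left (by positivity) one_le_two)
  have hsqrt : √(N * ε ^ 2 * log δ⁻¹ / 2) = ε * √(N * log δ⁻¹ / 2) := by
    rw [show N * ε ^ 2 * log δ⁻¹ / 2 = ε ^ 2 * (N * log δ⁻¹ / 2) by ring,
      sqrt_mul (sq_nonneg ε), sqrt_sq hε]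
  rw [hsqrt]
  gcongr
  linarith [mul_nonneg hN (sq_nonneg ε)]

/-- **Max-information bound for ε-stable algorithms** (Lemma 5 / Statement 9).
Let `𝒜` be an `ε`-stable (ε-differentially private) randomized algorithm — modeled
as a Markov kernel `κ` from `n`-tuples of observations to outputs — applied to `n`
i.i.d. observations with common distribution `Pobs`.  Then for every `δ ∈ (0,1)`, the
`δ`-approximate max information between the input and the output is at most
`(n/2)ε² + ε√(n log(2/δ)/2)`; i.e., for every measurable event `ℰ` of
(input, output) pairs,
`P((O, 𝒜(O)) ∈ ℰ) − δ ≤ exp((n/2)ε² + ε√(n log(2/δ)/2)) · P((O, 𝒜(O')) ∈ ℰ)`,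
where `O'` is an independent i.i.d. copy of the data. -/
theorem max_information_bound_of_stable
    {𝒪 Θ : Type*} [MeasurableSpace 𝒪] [MeasurableSpace Θ]
    (Pobs : Measure 𝒪) [IsProbabilityMeasure Pobs]
    (n : ℕ) (hn : 0 < n) (ε : ℝ) (hε : 0 < ε)
    (κ : Kernel (Fin n → 𝒪) Θ) [IsMarkovKernel κ]
    -- ε-stability of the algorithm κ
    (hstable : ∀ d d' : Fin n → 𝒪, AdjacentTuples d d' →
      ∀ E : Set Θ, MeasurableSet E →
        κ d E ≤ ENNReal.ofReal (Real.exp ε) * κ d' E)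
    (δ : ℝ) (hδ : δ ∈ Set.Ioo (0 : ℝ) 1) :
    ∀ E : Set ((Fin n → 𝒪) × Θ), MeasurableSet E →
      (((Measure.pi fun _ : Fin n => Pobs) ⊗ₘ κ) E).toReal - δ
        ≤ Real.exp ((n / 2) * ε ^ 2 + ε * Real.sqrt (n * Real.log (2 / δ) / 2))
          * (((Measure.pi fun _ : Fin n => Pobs).prod
              ((Measure.pi fun _ : Fin n => Pobs).bind fun d => κ d)) E).toReal := by
  intro E _
  have hS : ∑ _ : Fin n, ε ^ 2 = n * ε ^ 2 := by simp
  have hbound := max_information_bound_of_stable_general (fun _ => Pobs)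
    (isStable_of_adjacentTuples hstable) (by rw [hS]; positivity)
    (Set.Ioo_subset_Ioc_self hδ) E
  rw [hS] at hbound
  refine hbound.trans ?_
  gcongr ?_ * _
  exact exp_le_exp.2 (sq_div_eight_add_sqrt_log_inv_le n.cast_nonneg hε.le hδ.1)
end
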